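/- arXiv:0810.0443 — 3 statements merged into one kernel-verified Lean document; each statement's English description precedes it below -/
import Mathlib

section
/- The group H = ⟨a, b, t ∣ t a t⁻¹ = ab, t b t⁻¹ = ba⟩ has a subgroup of finite index that is residually (finite 5), i.e. H is virtually a residually (finite 5)-group. -/
/-- The defining relations of `H = ⟨a, b, t ∣ t a t⁻¹ = ab, t b t⁻¹ = ba⟩`, with generators
`0 ↦ a`, `1 ↦ b`, `2 ↦ t`. -/
def hGroupRels : Set (FreeGroup (Fin 3)) :=
  { FreeGroup.of 2 * FreeGroup.of 0 * (FreeGroup.of 2)⁻¹ *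
      (FreeGroup.of 0 * FreeGroup.of 1)⁻¹,
    FreeGroup.of 2 * FreeGroup.of 1 * (FreeGroup.of 2)⁻¹ *
      (FreeGroup.of 1 * FreeGroup.of 0)⁻¹ }

/-- The group `H = ⟨a, b, t ∣ t a t⁻¹ = ab, t b t⁻¹ = ba⟩`. -/
abbrev HGroup : Type := PresentedGroup hGroupRels

/-- A group `G` is residually (finite `p`) if every nontrivial element has a nontrivial
image under some homomorphism onto a finite `p`-group. -/
def ResiduallyFiniteP (p : ℕ) (G : Type*) [Group G] : Prop :=
  ∀ g : G, g ≠ 1 → ∃ (Q : Type) (_ : Group Q) (_ : Fintype Q) (f : G →* Q),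
    Function.Surjective f ∧ IsPGroup p Q ∧ f g ≠ 1

/-!
`HGroup` acts on the trace algebra, the universal algebra generated by two matrices `a`, `b` of
determinant `1` with `tr a = tr b = x` and `tr ab = z`: the letters `a`, `b` act by left
multiplication and `t` by the substitution `a ↦ ab`, `b ↦ ba`, which is semilinear over the trace
map `σ : x ↦ z, z ↦ x² z - 2 x² + 2`. Over `ℤ[x, z]` this substitution is not invertible, but `σ`
fixes the point `(1, 1)`, and for an odd prime `p` it becomes an automorphism of the finite ring
`ℤ[x, z] / I ^ k`, where `I = (p, x - 1, z - 1)`. So `HGroup` acts on a finite ring at every level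
`k`. An element acting trivially at level `2` acts at level `k` as the identity modulo the square of
a nilpotent ideal containing `p`, hence unipotently, hence with order a power of `p`. Thus the
kernel at level `2` maps to a `p`-group at every level.

An element with nonzero exponent sum in `t` survives in `ℤ`. Any other nontrivial element is
conjugate to a nontrivial word in `a`, `b`, which acts nontrivially at some level because
`⋂ I ^ k = 0` and because the specialisation `x = 2`, `z = 6` gives Sanov's free group of matrices.
-/

namespace ResiduallyFiniteP

variable {p : ℕ}

theorem of_isPGroup {G : Type} [Group G] [Finite G] (hG : IsPGroup p G) :
    ResiduallyFiniteP p G :=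
  fun _ hg => ⟨G, _, Fintype.ofFinite G, MonoidHom.id G, Function.surjective_id, hG, hg⟩

theorem of_forall_exists_hom {G : Type*} [Group G]
    (h : ∀ g : G, g ≠ 1 → ∃ (Q : Type*) (_ : Group Q) (f : G →* Q),
      ResiduallyFiniteP p Q ∧ f g ≠ 1) :
    ResiduallyFiniteP p G := by
  intro g hg
  obtain ⟨Q, _, f, hQ, hfg⟩ := h g hg
  obtain ⟨P, _, _, π, -, hP, hπ⟩ := hQ (f g) hfg
  refine ⟨(π.comp f).range, inferInstance, Fintype.ofFinite _, (π.comp f).rangeRestrict,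
    (π.comp f).rangeRestrict_surjective, hP.to_subgroup _, fun h1 => hπ ?_⟩
  exact congrArg Subtype.val h1

theorem multiplicative_int (hp : 1 < p) : ResiduallyFiniteP p (Multiplicative ℤ) := by
  refine of_forall_exists_hom fun n hn => ?_
  set N := n.toAdd.natAbs
  have : NeZero (p ^ N) := ⟨by positivity⟩
  refine ⟨Multiplicative (ZMod (p ^ N)), inferInstance,
    (Int.castAddHom (ZMod (p ^ N))).toMultiplicative, ?_, fun h => hn ?_⟩
  · have : Finite (Multiplicative (ZMod (p ^ N))) := inferInstanceAs (Finite (ZMod (p ^ N)))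
    exact of_isPGroup (IsPGroup.of_card (n := N) (Nat.card_zmod _))
  · have hdvd : ((p ^ N : ℕ) : ℤ) ∣ n.toAdd :=
      (ZMod.intCast_zmod_eq_zero_iff_dvd _ _).mp (Multiplicative.ofAdd.injective h)
    exact Multiplicative.toAdd.injective
      (Int.eq_zero_of_dvd_of_natAbs_lt_natAbs hdvd (by simpa using Nat.lt_pow_self hp))

end ResiduallyFiniteP

section Unipotent

variable {p : ℕ}

open Polynomial in
theorem exists_one_add_pow_prime_pow_eq_one {E : Type*} [Ring E] (hp : p.Prime) {n : E}
    (hn : IsNilpotent n) (hpE : IsNilpotent (p : E)) : ∃ K, (1 + n) ^ p ^ K = 1 := by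
  obtain ⟨m, hm⟩ := hn
  obtain ⟨k, hk⟩ := hpE
  have hdvd : ((p : ℕ) : ℤ[X]) ∣ (1 + X) ^ p ^ m - (1 + X ^ p ^ m) := by
    obtain ⟨r, hr⟩ := exists_add_pow_prime_pow_eq hp (1 : ℤ[X]) X m
    exact ⟨X * r, by rw [hr]; ring⟩
  obtain ⟨s, hs⟩ := dvd_sub_pow_of_dvd_sub hdvd k
  have hnm : n ^ p ^ m = 0 := pow_eq_zero_of_le (Nat.lt_pow_self hp.one_lt).le hm
  have heval := congrArg (aeval n) hs
  simp only [map_sub, map_mul, map_pow, map_add, map_one, aeval_X, map_natCast, hnm, add_zero,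
    one_pow, pow_succ, hk, zero_mul, ← pow_mul, sub_eq_zero] at heval
  exact ⟨m + k, by rw [pow_add, heval]⟩

variable {A : Type*} [Ring A] {J : Ideal A} [J.IsTwoSided] {u : A} {θ : A →+* A}

theorem mul_map_sub_mem_pow_succ (h : ∀ v, u * θ v - v ∈ J ^ 2) (j : ℕ) :
    ∀ v ∈ J ^ j, u * θ v - v ∈ J ^ (j + 1) := by
  have hJ : J ^ 2 ≤ J := Ideal.pow_le_self two_ne_zero
  have hθ (v : A) : θ v - v ∈ J ^ 2 := by
    have e : θ v - v = (u * θ v - v) - (u * θ 1 - 1) * θ v := by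
      rw [map_one]; noncomm_ring
    exact e ▸ sub_mem (h v) (Ideal.IsTwoSided.mul_mem_of_left _ (h 1))
  induction j with
  | zero => exact fun v _ => by rw [zero_add, Submodule.pow_one]; exact hJ (h v)
  | succ j ih =>
    intro v hv
    rw [Submodule.pow_succ] at hv
    refine Submodule.mul_induction_on hv (fun s hs t ht => ?_) fun s t hs ht => ?_
    · have hθt : θ t ∈ J := by simpa using add_mem (hJ (hθ t)) ht
      have e : u * θ (s * t) - s * t = (u * θ s - s) * θ t + s * (θ t - t) := by
        rw [map_mul]; noncomm_ring
      rw [e]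
      refine add_mem ?_ ?_
      · rw [Submodule.pow_succ]
        exact Ideal.mul_mem_mul (ih s hs) hθt
      · rw [add_assoc, Ideal.IsTwoSided.pow_add]
        exact Ideal.mul_mem_mul hs (hθ t)
    · rw [map_add, mul_add, add_sub_add_comm]
      exact add_mem hs ht

theorem exists_iterate_mul_map_eq_id (hp : p.Prime) (hJ : IsNilpotent J) (hpJ : (p : A) ∈ J)
    (h : ∀ v, u * θ v - v ∈ J ^ 2) : ∃ K, (fun v => u * θ v)^[p ^ K] = id := by
  obtain ⟨k, hk⟩ := hJ
  let g : AddMonoid.End A := (AddMonoidHom.mulLeft u).comp θ.toAddMonoidHom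
  have hmem (j : ℕ) (v : A) : ((g - 1) ^ j) v ∈ J ^ j := by
    induction j with
    | zero => simp [Submodule.pow_zero]
    | succ j ih =>
      rw [pow_succ']
      exact mul_map_sub_mem_pow_succ h j _ ih
  have hg : IsNilpotent (g - 1) := ⟨k, by ext v; simpa [hk] using hmem k v⟩
  have hpk : (p : A) ^ k = 0 := by simpa [hk] using Ideal.pow_mem_pow hpJ k
  have hpE : IsNilpotent (p : AddMonoid.End A) := by
    refine ⟨k, ?_⟩
    ext v
    rw [← Nat.cast_pow, AddMonoid.End.natCast_apply, nsmul_eq_mul, Nat.cast_pow, hpk, zero_mul]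
    rfl
  obtain ⟨K, hK⟩ := exists_one_add_pow_prime_pow_eq_one hp hg hpE
  rw [add_sub_cancel] at hK
  exact ⟨K, (AddMonoid.End.coe_pow A g _).symm.trans (congrArg DFunLike.coe hK)⟩

end Unipotent

namespace HGroup

section Lift

variable {G : Type*} [Group G] {a b t : G}

theorem lift_rels (ha : t * a * t⁻¹ = a * b) (hb : t * b * t⁻¹ = b * a) :
    ∀ r ∈ hGroupRels, FreeGroup.lift ![a, b, t] r = 1 := by
  rintro r (rfl | rfl) <;> simp [ha, hb]

/-- The universal property of `HGroup`: the homomorphism to `G` with `a`, `b`, `t` as the images of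
the three generators. -/
def lift (ha : t * a * t⁻¹ = a * b) (hb : t * b * t⁻¹ = b * a) : HGroup →* G :=
  PresentedGroup.toGroup (lift_rels ha hb)

/-- The stable letter `t` of the HNN extension. -/
def stable : HGroup := PresentedGroup.of 2

/-- The homomorphism from the base group `⟨a, b⟩` of the HNN extension. -/
def ofFree : FreeGroup (Fin 2) →* HGroup :=
  FreeGroup.lift ![PresentedGroup.of 0, PresentedGroup.of 1]

/-- The Thue–Morse endomorphism `a ↦ ab`, `b ↦ ba` of the base group. -/
def thueMorse : FreeGroup (Fin 2) →* FreeGroup (Fin 2) :=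
  FreeGroup.lift ![FreeGroup.of 0 * FreeGroup.of 1, FreeGroup.of 1 * FreeGroup.of 0]

theorem lift_stable (ha : t * a * t⁻¹ = a * b) (hb : t * b * t⁻¹ = b * a) :
    lift ha hb stable = t :=
  PresentedGroup.toGroup.of _

theorem lift_ofFree (ha : t * a * t⁻¹ = a * b) (hb : t * b * t⁻¹ = b * a)
    (w : FreeGroup (Fin 2)) : lift ha hb (ofFree w) = FreeGroup.lift ![a, b] w := by
  refine DFunLike.congr_fun (f := (lift ha hb).comp ofFree) (FreeGroup.ext_hom _ _ fun i => ?_) w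
  fin_cases i <;> simp [lift, ofFree]

end Lift

theorem stable_mul_ofFree (w : FreeGroup (Fin 2)) :
    stable * ofFree w = ofFree (thueMorse w) * stable := by
  rw [← mul_inv_eq_iff_eq_mul]
  refine DFunLike.congr_fun (f := (MulAut.conj stable).toMonoidHom.comp ofFree)
    (g := ofFree.comp thueMorse) (FreeGroup.ext_hom _ _ fun i => ?_) w
  fin_cases i <;> simp only [thueMorse, ofFree, stable, Fin.zero_eta, Fin.mk_one,
      MonoidHom.comp_apply, FreeGroup.lift_apply_of, Matrix.cons_val, map_mul]
  · exact PresentedGroup.mk_eq_mk_of_mul_inv_mem (Or.inl rfl)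
  · exact PresentedGroup.mk_eq_mk_of_mul_inv_mem (Or.inr rfl)

theorem stable_pow_mul_ofFree (n : ℕ) (w : FreeGroup (Fin 2)) :
    stable ^ n * ofFree w = ofFree (thueMorse^[n] w) * stable ^ n := by
  induction n generalizing w with
  | zero => simp
  | succ n ih =>
    rw [pow_succ, mul_assoc, stable_mul_ofFree, ← mul_assoc, ih, mul_assoc,
      Function.iterate_succ_apply]

theorem induction_left {P : HGroup → Prop} (one : P 1)
    (ofFree_mul : ∀ w g, P g → P (ofFree w * g)) (stable_mul : ∀ g, P g → P (stable * g))
    (stable_inv_mul : ∀ g, P g → P (stable⁻¹ * g)) (g : HGroup) : P g := by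
  have hg : g ∈ Subgroup.closure (Set.range (PresentedGroup.of : Fin 3 → HGroup)) := by
    rw [PresentedGroup.closure_range_of]
    trivial
  have h0 : ofFree (FreeGroup.of 0) = PresentedGroup.of 0 := FreeGroup.lift_apply_of
  have h1 : ofFree (FreeGroup.of 1) = PresentedGroup.of 1 := FreeGroup.lift_apply_of
  induction hg using Subgroup.closure_induction_left with
  | one => exact one
  | mul_left s hs y _ ih =>
    obtain ⟨i, rfl⟩ := hs
    fin_cases i
    · exact h0 ▸ ofFree_mul _ y ih
    · exact h1 ▸ ofFree_mul _ y ih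
    · exact stable_mul y ih
  | inv_mul_cancel s hs y _ ih =>
    obtain ⟨i, rfl⟩ := hs
    fin_cases i
    · simpa [h0] using ofFree_mul (FreeGroup.of 0)⁻¹ y ih
    · simpa [h1] using ofFree_mul (FreeGroup.of 1)⁻¹ y ih
    · exact stable_inv_mul y ih

theorem exists_stable_pow_mul_eq (g : HGroup) :
    ∃ (n m : ℕ) (w : FreeGroup (Fin 2)), stable ^ n * g = ofFree w * stable ^ m := by
  induction g using induction_left with
  | one => exact ⟨0, 0, 1, by simp⟩
  | ofFree_mul v g ih =>
    obtain ⟨n, m, w, h⟩ := ih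
    exact ⟨n, m, thueMorse^[n] v * w, by
      rw [← mul_assoc, stable_pow_mul_ofFree, mul_assoc, h, map_mul, mul_assoc]⟩
  | stable_mul g ih =>
    obtain ⟨n, m, w, h⟩ := ih
    exact ⟨n, m + 1, thueMorse w, by
      rw [← mul_assoc, ← pow_succ, pow_succ', mul_assoc, h, ← mul_assoc, stable_mul_ofFree,
        mul_assoc, pow_succ']⟩
  | stable_inv_mul g ih =>
    obtain ⟨n, m, w, h⟩ := ih
    exact ⟨n + 1, m, w, by rw [pow_succ, mul_assoc, mul_inv_cancel_left, h]⟩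

/-- The exponent sum of the stable letter. -/
def exponentSum : HGroup →* Multiplicative ℤ :=
  lift (a := 1) (b := 1) (t := Multiplicative.ofAdd 1) (by simp) (by simp)

theorem exponentSum_stable : exponentSum stable = Multiplicative.ofAdd 1 :=
  lift_stable _ _

theorem exponentSum_ofFree (w : FreeGroup (Fin 2)) : exponentSum (ofFree w) = 1 := by
  rw [exponentSum, lift_ofFree]
  refine DFunLike.congr_fun (g := 1) (FreeGroup.ext_hom _ _ fun i => ?_) w
  fin_cases i <;> simp

theorem exists_ofFree_eq_conj {g : HGroup} (hg : exponentSum g = 1) :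
    ∃ (n : ℕ) (w : FreeGroup (Fin 2)), ofFree w = stable ^ n * g * (stable ^ n)⁻¹ := by
  obtain ⟨n, m, w, h⟩ := exists_stable_pow_mul_eq g
  have hnm : n = m := by
    have := congrArg exponentSum h
    simpa [hg, exponentSum_ofFree, exponentSum_stable, ← ofAdd_nsmul] using this
  exact ⟨n, w, by rw [h, ← hnm, mul_inv_cancel_right]⟩

section SemilinearRep

variable {A B : Type*} [Ring A] [Ring B] {a b : Aˣ} {θ : RingAut A} {a' b' : Bˣ}
  {θ' : RingAut B}

/-- The action of `HGroup` on a ring with two units `a`, `b` and an automorphism `θ` sending `a` to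
`ab` and `b` to `ba`: the base group acts by left multiplication and the stable letter by `θ`. -/
def semilinearRep (ha : θ a = (a * b : A)) (hb : θ b = (b * a : A)) : HGroup →* Equiv.Perm A :=
  lift (a := MulAction.toPermHom Aˣ A a) (b := MulAction.toPermHom Aˣ A b)
    (t := MulAction.toPermHom (RingAut A) A θ)
    (mul_inv_eq_of_eq_mul (Equiv.ext fun v => by simp [Units.smul_def, ha, mul_assoc]))
    (mul_inv_eq_of_eq_mul (Equiv.ext fun v => by simp [Units.smul_def, hb, mul_assoc]))

variable (ha : θ a = (a * b : A)) (hb : θ b = (b * a : A))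

theorem semilinearRep_ofFree_apply (w : FreeGroup (Fin 2)) (v : A) :
    semilinearRep ha hb (ofFree w) v = (FreeGroup.lift ![a, b] w : Aˣ) * v := by
  have h : FreeGroup.lift ![MulAction.toPermHom Aˣ A a, MulAction.toPermHom Aˣ A b] =
      (MulAction.toPermHom Aˣ A).comp (FreeGroup.lift ![a, b]) :=
    FreeGroup.ext_hom _ _ fun i => by fin_cases i <;> simp
  rw [semilinearRep, lift_ofFree, h]
  rfl

theorem semilinearRep_stable_apply (v : A) : semilinearRep ha hb stable v = θ v := by
  rw [semilinearRep, lift_stable]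
  rfl

theorem semilinearRep_stable_symm_apply (v : A) :
    (semilinearRep ha hb stable).symm v = θ.symm v := by
  rw [Equiv.symm_apply_eq, semilinearRep_stable_apply, RingEquiv.apply_symm_apply]

theorem exists_semilinearRep_apply_eq (g : HGroup) :
    ∃ (u : A) (φ : RingAut A), ∀ v, semilinearRep ha hb g v = u * φ v := by
  induction g using induction_left with
  | one => exact ⟨1, 1, fun v => by simp⟩
  | ofFree_mul w g ih =>
    obtain ⟨u, φ, h⟩ := ih
    exact ⟨FreeGroup.lift ![a, b] w * u, φ, fun v => by
      simp [semilinearRep_ofFree_apply, h, mul_assoc]⟩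
  | stable_mul g ih =>
    obtain ⟨u, φ, h⟩ := ih
    exact ⟨θ u, θ * φ, fun v => by simp [semilinearRep_stable_apply, h]⟩
  | stable_inv_mul g ih =>
    obtain ⟨u, φ, h⟩ := ih
    exact ⟨θ.symm u, θ⁻¹ * φ, fun v => by simp [semilinearRep_stable_symm_apply, h]⟩

theorem map_semilinearRep_apply {ha : θ a = (a * b : A)} {hb : θ b = (b * a : A)}
    {ha' : θ' a' = (a' * b' : B)} {hb' : θ' b' = (b' * a' : B)} {f : A →+* B}
    (hfa : Units.map f a = a') (hfb : Units.map f b = b') (hfθ : ∀ v, f (θ v) = θ' (f v))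
    (g : HGroup) (v : A) :
    f (semilinearRep ha hb g v) = semilinearRep ha' hb' g (f v) := by
  induction g using induction_left with
  | one => simp
  | ofFree_mul w g ih =>
    have hw : (Units.map (f : A →* B)).comp (FreeGroup.lift ![a, b]) = FreeGroup.lift ![a', b'] :=
      FreeGroup.ext_hom _ _ fun i => by fin_cases i <;> simp [hfa, hfb]
    simp [semilinearRep_ofFree_apply, ih, ← hw]
  | stable_mul g ih => simp [semilinearRep_stable_apply, ih, hfθ]
  | stable_inv_mul g ih =>
    have hsymm (v : A) : f (θ.symm v) = θ'.symm (f v) := by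
      rw [RingEquiv.eq_symm_apply, ← hfθ, RingEquiv.apply_symm_apply]
    simp [semilinearRep_stable_symm_apply, ih, hsymm]

end SemilinearRep

end HGroup

/-- The trace algebra: the free module with basis `1`, `a`, `b`, `ab` and coordinates `c0`, `c1`,
`c2`, `c3`, multiplied by the rules `a² = x a - 1`, `b² = x b - 1` and
`b a = (z - x²) + x a + x b - a b`. They hold for `2 × 2` matrices of determinant `1` with
`tr a = tr b = x` and `tr ab = z`. -/
@[ext]
structure TraceAlgebra {R : Type*} (x z : R) where
  c0 : R
  c1 : R
  c2 : R
  c3 : R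

namespace TraceAlgebra

variable {R S : Type*} [CommRing R] [CommRing S] {x z : R} {x' z' : S}

@[simps]
instance : Zero (TraceAlgebra x z) := ⟨⟨0, 0, 0, 0⟩⟩

@[simps]
instance : One (TraceAlgebra x z) := ⟨⟨1, 0, 0, 0⟩⟩

@[simps]
instance : Add (TraceAlgebra x z) :=
  ⟨fun u v => ⟨u.c0 + v.c0, u.c1 + v.c1, u.c2 + v.c2, u.c3 + v.c3⟩⟩

@[simps]
instance : Neg (TraceAlgebra x z) := ⟨fun u => ⟨-u.c0, -u.c1, -u.c2, -u.c3⟩⟩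

@[simps]
instance : Sub (TraceAlgebra x z) :=
  ⟨fun u v => ⟨u.c0 - v.c0, u.c1 - v.c1, u.c2 - v.c2, u.c3 - v.c3⟩⟩

@[simps]
instance : Mul (TraceAlgebra x z) := ⟨fun u v =>
  ⟨u.c0 * v.c0 - u.c1 * v.c1 + (z - x ^ 2) * (u.c2 * v.c1) - u.c2 * v.c2 - x * (u.c2 * v.c3)
      - x * (u.c3 * v.c1) - u.c3 * v.c3,
   u.c0 * v.c1 + u.c1 * v.c0 + x * (u.c1 * v.c1) + x * (u.c2 * v.c1) + u.c2 * v.c3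
      + z * (u.c3 * v.c1) - u.c3 * v.c2,
   u.c0 * v.c2 + u.c2 * v.c0 - u.c1 * v.c3 + x * (u.c2 * v.c1) + x * (u.c2 * v.c2)
      + z * (u.c2 * v.c3) + u.c3 * v.c1,
   u.c0 * v.c3 + u.c3 * v.c0 + u.c1 * v.c2 + x * (u.c1 * v.c3) - u.c2 * v.c1
      + x * (u.c3 * v.c2) + z * (u.c3 * v.c3)⟩⟩

instance : Ring (TraceAlgebra x z) where
  add_assoc u v w := by ext <;> simp [add_assoc]
  zero_add u := by ext <;> simp
  add_zero u := by ext <;> simp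
  add_comm u v := by ext <;> simp [add_comm]
  neg_add_cancel u := by ext <;> simp
  sub_eq_add_neg u v := by ext <;> simp [sub_eq_add_neg]
  mul_assoc u v w := by ext <;> simp only [mul_c0, mul_c1, mul_c2, mul_c3] <;> ring
  one_mul u := by ext <;> simp
  mul_one u := by ext <;> simp
  zero_mul u := by ext <;> simp
  mul_zero u := by ext <;> simp
  left_distrib u v w := by
    ext <;> simp only [mul_c0, mul_c1, mul_c2, mul_c3, add_c0, add_c1, add_c2, add_c3] <;> ring
  right_distrib u v w := by
    ext <;> simp only [mul_c0, mul_c1, mul_c2, mul_c3, add_c0, add_c1, add_c2, add_c3] <;> ring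
  nsmul := nsmulRec
  zsmul := zsmulRec

instance [Finite R] : Finite (TraceAlgebra x z) :=
  Finite.of_injective (fun u => (u.c0, u.c1, u.c2, u.c3)) fun u v h => by
    cases u; cases v; simpa using h

/-- The inclusion of the scalars in the trace algebra. -/
@[simps]
def C (x z : R) : R →+* TraceAlgebra x z where
  toFun r := ⟨r, 0, 0, 0⟩
  map_one' := rfl
  map_zero' := rfl
  map_add' r s := by ext <;> simp
  map_mul' r s := by ext <;> simp

/-- The generator `a` of the trace algebra. Its inverse is `x - a`, since `a² = x a - 1`. -/
@[simps]
def genA (x z : R) : (TraceAlgebra x z)ˣ where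
  val := ⟨0, 1, 0, 0⟩
  inv := ⟨x, -1, 0, 0⟩
  val_inv := by ext <;> simp
  inv_val := by ext <;> simp

/-- The generator `b` of the trace algebra. -/
@[simps]
def genB (x z : R) : (TraceAlgebra x z)ˣ where
  val := ⟨0, 0, 1, 0⟩
  inv := ⟨x, 0, -1, 0⟩
  val_inv := by ext <;> simp
  inv_val := by ext <;> simp

/-- Change of scalars in the trace algebra. -/
@[simps]
def map (f : R →+* S) (hx : f x = x') (hz : f z = z') :
    TraceAlgebra x z →+* TraceAlgebra x' z' where
  toFun u := ⟨f u.c0, f u.c1, f u.c2, f u.c3⟩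
  map_one' := by ext <;> simp
  map_zero' := by ext <;> simp
  map_add' u v := by ext <;> simp
  map_mul' u v := by ext <;> simp [hx, hz]

theorem map_genA (f : R →+* S) (hx : f x = x') (hz : f z = z') :
    Units.map (map f hx hz) (genA x z) = genA x' z' :=
  Units.ext (by ext <;> simp)

theorem map_genB (f : R →+* S) (hx : f x = x') (hz : f z = z') :
    Units.map (map f hx hz) (genB x z) = genB x' z' :=
  Units.ext (by ext <;> simp)

theorem map_lift_gen (f : R →+* S) (hx : f x = x') (hz : f z = z') (w : FreeGroup (Fin 2)) :
    map f hx hz (FreeGroup.lift ![genA x z, genB x z] w : (TraceAlgebra x z)ˣ) =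
      (FreeGroup.lift ![genA x' z', genB x' z'] w : (TraceAlgebra x' z')ˣ) := by
  have h : (Units.map (map f hx hz)).comp (FreeGroup.lift ![genA x z, genB x z]) =
      FreeGroup.lift ![genA x' z', genB x' z'] :=
    FreeGroup.ext_hom _ _ fun i => by fin_cases i <;> simp [map_genA, map_genB]
  exact congrArg Units.val (DFunLike.congr_fun h w)

/-- A trace map of the Thue–Morse endomorphism: `σ` sends the traces `x` of `a`, `b` and `z` of `ab`
to the traces of `ab`, `ba` and `(ab)(ba)`. -/
structure IsTraceMap (σ : R →+* R) (x z : R) : Prop where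
  map_x : σ x = z
  map_z : σ z = x ^ 2 * z - 2 * x ^ 2 + 2

/-- The Thue–Morse endomorphism `a ↦ ab`, `b ↦ ba`, acting by the trace map `σ` on scalars: the
coordinates of `σ c₀ + σ c₁ · ab + σ c₂ · ba + σ c₃ · (ab)(ba)` in the basis `1`, `a`, `b`, `ab`. -/
@[simps]
def thueMorse {σ : R →+* R} (h : IsTraceMap σ x z) : TraceAlgebra x z →+* TraceAlgebra x z where
  toFun u :=
    ⟨σ u.c0 + (z - x ^ 2) * σ u.c2 + (1 - x ^ 2) * σ u.c3, x * σ u.c2 + x * (z - 1) * σ u.c3,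
      x * σ u.c2 + x * σ u.c3, σ u.c1 - σ u.c2⟩
  map_one' := by ext <;> simp
  map_zero' := by ext <;> simp
  map_add' u v := by ext <;> simp only [add_c0, add_c1, add_c2, add_c3, map_add] <;> ring
  map_mul' u v := by
    ext <;> simp only [mul_c0, mul_c1, mul_c2, mul_c3, map_add, map_sub, map_mul, map_pow, h.map_x,
      h.map_z] <;> ring

variable {σ : R →+* R} {τ : S →+* S}

theorem thueMorse_genA (h : IsTraceMap σ x z) :
    thueMorse h (genA x z) = (genA x z * genB x z : TraceAlgebra x z) := by
  ext <;> simp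

theorem thueMorse_genB (h : IsTraceMap σ x z) :
    thueMorse h (genB x z) = (genB x z * genA x z : TraceAlgebra x z) := by
  ext <;> simp

theorem map_thueMorse (h : IsTraceMap σ x z) (h' : IsTraceMap τ x' z') {f : R →+* S}
    (hx : f x = x') (hz : f z = z') (hf : ∀ r, f (σ r) = τ (f r)) (u : TraceAlgebra x z) :
    map f hx hz (thueMorse h u) = thueMorse h' (map f hx hz u) := by
  ext <;> simp [hx, hz, hf]

theorem thueMorse_injective (h : IsTraceMap σ x z) (hx : IsUnit x) (hz : IsUnit (z - 2))
    (hσ : Function.Injective σ) : Function.Injective (thueMorse h) := by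
  rw [injective_iff_map_eq_zero]
  intro u hu
  rw [TraceAlgebra.ext_iff] at hu
  simp only [thueMorse_apply_c0, thueMorse_apply_c1, thueMorse_apply_c2, thueMorse_apply_c3,
    zero_c0, zero_c1, zero_c2, zero_c3] at hu
  obtain ⟨h0, h1, h2, h3⟩ := hu
  have k3 : σ u.c3 = 0 := (hx.mul hz).mul_right_eq_zero.mp (by linear_combination h1 - h2)
  have k2 : σ u.c2 = 0 := hx.mul_right_eq_zero.mp (by linear_combination h2 - x * k3)
  have k1 : σ u.c1 = 0 := by linear_combination h3 + k2
  have k0 : σ u.c0 = 0 := by linear_combination h0 - (z - x ^ 2) * k2 - (1 - x ^ 2) * k3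
  rw [map_eq_zero_iff σ hσ] at k0 k1 k2 k3
  exact TraceAlgebra.ext k0 k1 k2 k3

theorem IsTraceMap.surjective {p : ℕ} (h : IsTraceMap σ x z) (hgen : Subring.closure {x, z} = ⊤)
    (hp : p.Prime) (hp2 : p ≠ 2) (hpR : IsNilpotent (p : R)) (hx : IsNilpotent (x - 1))
    (hz : IsNilpotent (z - 1)) : Function.Surjective σ := by
  have hzσ : z ∈ σ.range := ⟨x, h.map_x⟩
  have hx2σ : x ^ 2 ∈ σ.range := by
    obtain ⟨K, hK⟩ := exists_one_add_pow_prime_pow_eq_one hp hz.neg hpR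
    have hinv : (2 - z) * (2 - z) ^ (p ^ K - 1) = 1 := by
      rw [mul_pow_sub_one (pow_ne_zero K hp.ne_zero), ← hK]
      ring
    have e : x ^ 2 = (2 - σ z) * (2 - z) ^ (p ^ K - 1) := by
      rw [h.map_z]
      linear_combination -(x ^ 2) * hinv
    have h2σ : (2 : R) ∈ σ.range := ofNat_mem _ 2
    exact e ▸ mul_mem (sub_mem h2σ ⟨z, rfl⟩) (pow_mem (sub_mem h2σ hzσ) _)
  have hxσ : x ∈ σ.range := by
    obtain ⟨K, hK⟩ := exists_one_add_pow_prime_pow_eq_one hp hx hpR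
    obtain ⟨m, hm⟩ : Odd (p ^ K) := (hp.odd_of_ne_two hp2).pow
    have e : x = (x ^ 2) ^ (m + 1) := by
      rw [add_sub_cancel] at hK
      rw [← pow_mul, show 2 * (m + 1) = p ^ K + 1 by omega, pow_succ, hK, one_mul]
    exact e ▸ pow_mem hx2σ _
  rw [← RingHom.range_eq_top, eq_top_iff, ← hgen, Subring.closure_le]
  exact Set.insert_subset hxσ (Set.singleton_subset_iff.mpr hzσ)

/-- The Thue–Morse endomorphism of the trace algebra over a finite ring, as an automorphism. -/
noncomputable def thueMorseAut [Finite R] (h : IsTraceMap σ x z) (hx : IsUnit x)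
    (hz : IsUnit (z - 2)) (hσ : Function.Surjective σ) : RingAut (TraceAlgebra x z) :=
  RingEquiv.ofBijective (thueMorse h) (Finite.injective_iff_bijective.mp
    (thueMorse_injective h hx hz (Finite.injective_iff_surjective.mpr hσ)))

section CoeffIdeal

variable {I I' : Ideal R}

/-- The extension of the ideal `I` of scalars to the trace algebra. -/
def coeffIdeal (x z : R) (I : Ideal R) : Ideal (TraceAlgebra x z) where
  carrier := {u | u.c0 ∈ I ∧ u.c1 ∈ I ∧ u.c2 ∈ I ∧ u.c3 ∈ I}
  zero_mem' := by simp
  add_mem' := fun ⟨h0, h1, h2, h3⟩ ⟨h0', h1', h2', h3'⟩ =>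
    ⟨add_mem h0 h0', add_mem h1 h1', add_mem h2 h2', add_mem h3 h3'⟩
  smul_mem' := by
    simp only [← Ideal.Quotient.eq_zero_iff_mem]
    rintro u v ⟨h0, h1, h2, h3⟩
    simp [h0, h1, h2, h3]

theorem mem_coeffIdeal {u : TraceAlgebra x z} :
    u ∈ coeffIdeal x z I ↔ u.c0 ∈ I ∧ u.c1 ∈ I ∧ u.c2 ∈ I ∧ u.c3 ∈ I :=
  Iff.rfl

theorem coeffIdeal_bot : coeffIdeal x z ⊥ = ⊥ := by
  ext u
  simp [mem_coeffIdeal, TraceAlgebra.ext_iff]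

theorem coeffIdeal_top : coeffIdeal x z ⊤ = ⊤ := by
  ext u
  simp [mem_coeffIdeal]

theorem coeffIdeal_mul : coeffIdeal x z (I * I') = coeffIdeal x z I * coeffIdeal x z I' := by
  refine le_antisymm (fun u hu => ?_) (Ideal.mul_le.mpr fun u hu v hv => ?_)
  · have hC (r : R) (hr : r ∈ I * I') (e : TraceAlgebra x z) :
        C x z r * e ∈ coeffIdeal x z I * coeffIdeal x z I' := by
      induction hr using Submodule.mul_induction_on' with
      | mem_mul_mem s hs t ht =>
        rw [map_mul, mul_assoc]
        exact Ideal.mul_mem_mul (by simpa [mem_coeffIdeal] using hs)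
          (by simp [mem_coeffIdeal, Ideal.mul_mem_right, ht])
      | add s _ t _ ihs iht => rw [map_add, add_mul]; exact add_mem ihs iht
    have e : u = C x z u.c0 * 1 + C x z u.c1 * genA x z + C x z u.c2 * genB x z +
        C x z u.c3 * (genA x z * genB x z) := by
      ext <;> simp
    rw [e]
    obtain ⟨h0, h1, h2, h3⟩ := hu
    exact add_mem (add_mem (add_mem (hC _ h0 _) (hC _ h1 _)) (hC _ h2 _)) (hC _ h3 _)
  · have hmk {s t : R} (hs : s ∈ I) (ht : t ∈ I') :
        Ideal.Quotient.mk (I * I') s * Ideal.Quotient.mk (I * I') t = 0 := by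
      rw [← map_mul, Ideal.Quotient.eq_zero_iff_mem]
      exact Ideal.mul_mem_mul hs ht
    simp only [mem_coeffIdeal] at hu hv
    simp [mem_coeffIdeal, ← Ideal.Quotient.eq_zero_iff_mem, hmk, hu, hv]

instance : (coeffIdeal x z I).IsTwoSided where
  mul_mem_of_left v hu := by
    simp only [mem_coeffIdeal, ← Ideal.Quotient.eq_zero_iff_mem] at hu ⊢
    simp [hu]

theorem coeffIdeal_pow (k : ℕ) : coeffIdeal x z (I ^ k) = coeffIdeal x z I ^ k := by
  induction k with
  | zero => simp [Submodule.pow_zero, coeffIdeal_top]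
  | succ k ih => rw [pow_succ, Submodule.pow_succ, coeffIdeal_mul, ih]

theorem map_apply_eq_zero_iff {f : R →+* S} {hx : f x = x'} {hz : f z = z'} {u : TraceAlgebra x z} :
    map f hx hz u = 0 ↔ u ∈ coeffIdeal x z (RingHom.ker f) := by
  simp [TraceAlgebra.ext_iff, mem_coeffIdeal]

theorem natCast_mem_coeffIdeal {n : ℕ} (hn : (n : R) ∈ I) :
    (n : TraceAlgebra x z) ∈ coeffIdeal x z I := by
  rw [← map_natCast (C x z)]
  exact ⟨hn, zero_mem I, zero_mem I, zero_mem I⟩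

theorem exists_notMem_coeffIdeal_pow [IsNoetherianRing R] [IsDomain R] (hI : I ≠ ⊤)
    {u : TraceAlgebra x z} (hu : u ≠ 0) (m : ℕ) : ∃ k ≥ m, u ∉ coeffIdeal x z (I ^ k) := by
  by_contra! h
  have hzero {r : R} (hr : ∀ k ≥ m, r ∈ I ^ k) : r = 0 := by
    rw [← Ideal.mem_bot, ← Ideal.iInf_pow_eq_bot_of_isDomain I hI, Ideal.mem_iInf]
    exact fun k => Ideal.pow_le_pow_right (Nat.le_add_left k m) (hr (m + k) (Nat.le_add_right m k))
  exact hu (TraceAlgebra.ext (hzero fun k hk => (h k hk).1) (hzero fun k hk => (h k hk).2.1)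
    (hzero fun k hk => (h k hk).2.2.1) (hzero fun k hk => (h k hk).2.2.2))

end CoeffIdeal

end TraceAlgebra

section Sanov

open Matrix

/-- The generators `[[1, 2], [0, 1]]` and `[[1, 0], [2, 1]]` of Sanov's free group. -/
def sanovGen : Fin 2 → SpecialLinearGroup (Fin 2) ℤ :=
  ![⟨!![1, 2; 0, 1], by simp⟩, ⟨!![1, 0; 2, 1], by simp⟩]

theorem coe_sanovGen_zero : (sanovGen 0 : Matrix (Fin 2) (Fin 2) ℤ) = !![1, 2; 0, 1] :=
  rfl

theorem coe_sanovGen_one : (sanovGen 1 : Matrix (Fin 2) (Fin 2) ℤ) = !![1, 0; 2, 1] :=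
  rfl

/-- The attracting sets of the Sanov generators in the ping-pong game, cut out by the first column
`(p, q)`: `1 ≤ p / q ≤ ∞` for the first generator and `1 < q / p ≤ ∞` for the second. -/
def sanovAttracting : Fin 2 → Set (SpecialLinearGroup (Fin 2) ℤ) :=
  ![{g | (g 1 0 ≤ g 0 0 ∧ 0 ≤ g 1 0) ∨ (g 0 0 ≤ g 1 0 ∧ g 1 0 ≤ 0)},
    {g | (g 0 0 < g 1 0 ∧ 0 ≤ g 0 0) ∨ (g 1 0 < g 0 0 ∧ g 0 0 ≤ 0)}]

/-- The attracting sets of the inverses of the Sanov generators: `p / q < -1` for the first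
generator and `q / p ≤ -1` for the second, with `(p, q)` the first column. -/
def sanovRepelling : Fin 2 → Set (SpecialLinearGroup (Fin 2) ℤ) :=
  ![{g | (g 1 0 < 0 ∧ -g 1 0 < g 0 0) ∨ (0 < g 1 0 ∧ g 0 0 < -g 1 0)},
    {g | (g 0 0 < 0 ∧ -g 0 0 ≤ g 1 0) ∨ (0 < g 0 0 ∧ g 1 0 ≤ -g 0 0)}]

variable {g : SpecialLinearGroup (Fin 2) ℤ}

theorem mem_sanovAttracting_zero : g ∈ sanovAttracting 0 ↔
    (g 1 0 ≤ g 0 0 ∧ 0 ≤ g 1 0) ∨ (g 0 0 ≤ g 1 0 ∧ g 1 0 ≤ 0) :=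
  Iff.rfl

theorem mem_sanovAttracting_one : g ∈ sanovAttracting 1 ↔
    (g 0 0 < g 1 0 ∧ 0 ≤ g 0 0) ∨ (g 1 0 < g 0 0 ∧ g 0 0 ≤ 0) :=
  Iff.rfl

theorem mem_sanovRepelling_zero : g ∈ sanovRepelling 0 ↔
    (g 1 0 < 0 ∧ -g 1 0 < g 0 0) ∨ (0 < g 1 0 ∧ g 0 0 < -g 1 0) :=
  Iff.rfl

theorem mem_sanovRepelling_one : g ∈ sanovRepelling 1 ↔
    (g 0 0 < 0 ∧ -g 0 0 ≤ g 1 0) ∨ (0 < g 0 0 ∧ g 1 0 ≤ -g 0 0) :=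
  Iff.rfl

theorem sanovGen_zero_mul_col (g : SpecialLinearGroup (Fin 2) ℤ) :
    (sanovGen 0 * g) 0 0 = g 0 0 + 2 * g 1 0 ∧ (sanovGen 0 * g) 1 0 = g 1 0 := by
  simp [coe_sanovGen_zero, Matrix.mul_apply]

theorem sanovGen_one_mul_col (g : SpecialLinearGroup (Fin 2) ℤ) :
    (sanovGen 1 * g) 0 0 = g 0 0 ∧ (sanovGen 1 * g) 1 0 = 2 * g 0 0 + g 1 0 := by
  simp [coe_sanovGen_one, Matrix.mul_apply]

theorem firstCol_ne_zero (g : SpecialLinearGroup (Fin 2) ℤ) : g 0 0 ≠ 0 ∨ g 1 0 ≠ 0 := by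
  have hdet : g 0 0 * g 1 1 - g 0 1 * g 1 0 = 1 := by rw [← det_fin_two, g.det_coe]
  by_contra! h
  simp [h.1, h.2] at hdet

theorem sanovGen_mul_mem_sanovAttracting {i : Fin 2} (hg : g ∉ sanovRepelling i) :
    sanovGen i * g ∈ sanovAttracting i := by
  have hcol := firstCol_ne_zero g
  fin_cases i
  · have := sanovGen_zero_mul_col g
    simp only [Fin.zero_eta, mem_sanovRepelling_zero, mem_sanovAttracting_zero] at hg ⊢
    omega
  · have := sanovGen_one_mul_col g
    simp only [Fin.mk_one, mem_sanovRepelling_one, mem_sanovAttracting_one] at hg ⊢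
    omega

theorem sanovGen_inv_mul_mem_sanovRepelling {i : Fin 2} (hg : g ∉ sanovAttracting i) :
    (sanovGen i)⁻¹ * g ∈ sanovRepelling i := by
  fin_cases i
  · have := sanovGen_zero_mul_col ((sanovGen 0)⁻¹ * g)
    simp only [Fin.zero_eta, mul_inv_cancel_left, mem_sanovRepelling_zero,
      mem_sanovAttracting_zero] at this hg ⊢
    omega
  · have hcol := firstCol_ne_zero g
    have := sanovGen_one_mul_col ((sanovGen 1)⁻¹ * g)
    simp only [Fin.mk_one, mul_inv_cancel_left, mem_sanovRepelling_one,
      mem_sanovAttracting_one] at this hg ⊢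
    omega

theorem pairwise_disjoint_sanovAttracting :
    Pairwise (Function.onFun Disjoint sanovAttracting) := by
  rw [pairwise_disjoint_on]
  intro i j hij
  obtain ⟨rfl, rfl⟩ : i = 0 ∧ j = 1 := by omega
  rw [Set.disjoint_left]
  intro g
  rw [mem_sanovAttracting_zero, mem_sanovAttracting_one]
  omega

theorem pairwise_disjoint_sanovRepelling :
    Pairwise (Function.onFun Disjoint sanovRepelling) := by
  rw [pairwise_disjoint_on]
  intro i j hij
  obtain ⟨rfl, rfl⟩ : i = 0 ∧ j = 1 := by omega
  rw [Set.disjoint_left]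
  intro g
  rw [mem_sanovRepelling_zero, mem_sanovRepelling_one]
  omega

theorem disjoint_sanovAttracting_sanovRepelling (i j : Fin 2) :
    Disjoint (sanovAttracting i) (sanovRepelling j) := by
  rw [Set.disjoint_left]
  intro g
  fin_cases i <;> fin_cases j <;>
    simp only [Fin.zero_eta, Fin.mk_one, mem_sanovAttracting_zero, mem_sanovAttracting_one,
      mem_sanovRepelling_zero, mem_sanovRepelling_one] <;> omega

theorem sanov_injective : Function.Injective (FreeGroup.lift sanovGen) := by
  refine FreeGroup.injective_lift_of_ping_pong sanovGen sanovAttracting sanovRepelling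
    (Fin.forall_fin_two.mpr ⟨?_, ?_⟩) pairwise_disjoint_sanovAttracting
    pairwise_disjoint_sanovRepelling disjoint_sanovAttracting_sanovRepelling ?_ ?_
  · exact ⟨1, by simp [mem_sanovAttracting_zero]⟩
  · exact ⟨sanovGen 1, by simp [mem_sanovAttracting_one, coe_sanovGen_one]⟩
  · rintro i _ ⟨g, hg, rfl⟩
    exact sanovGen_mul_mem_sanovAttracting hg
  · rintro i _ ⟨g, hg, rfl⟩
    exact sanovGen_inv_mul_mem_sanovRepelling hg

end Sanov

namespace TraceAlgebra

variable {R : Type*} [CommRing R] {x z : R} {f : R →+* ℤ}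

open Matrix in
/-- The specialisation of the trace algebra at `x = 2`, `z = 6` to integer matrices, sending `a` and
`b` to the Sanov generators `A` and `B`: the entries of `f c₀ + f c₁ A + f c₂ B + f c₃ AB`. -/
@[simps]
def toMatrix (hx : f x = 2) (hz : f z = 6) : TraceAlgebra x z →+* Matrix (Fin 2) (Fin 2) ℤ where
  toFun u := !![f u.c0 + f u.c1 + f u.c2 + 5 * f u.c3, 2 * f u.c1 + 2 * f u.c3;
    2 * f u.c2 + 2 * f u.c3, f u.c0 + f u.c1 + f u.c2 + f u.c3]
  map_one' := by ext i j; fin_cases i <;> fin_cases j <;> simp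
  map_zero' := by ext i j; fin_cases i <;> fin_cases j <;> simp
  map_add' u v := by
    ext i j
    fin_cases i <;> fin_cases j <;> simp only [Fin.zero_eta, Fin.mk_one, of_apply, cons_val',
      cons_val_zero, cons_val_one, cons_val_fin_one, Matrix.add_apply, add_c0, add_c1, add_c2,
      add_c3, map_add] <;> ring
  map_mul' u v := by
    ext i j
    fin_cases i <;> fin_cases j <;> simp only [Fin.zero_eta, Fin.mk_one, of_apply, cons_val',
      cons_val_zero, cons_val_one, cons_val_fin_one, Matrix.mul_apply, Fin.sum_univ_two, mul_c0,
      mul_c1, mul_c2, mul_c3, map_add, map_sub, map_mul, map_pow, hx, hz] <;> ring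

theorem lift_gen_injective (hx : f x = 2) (hz : f z = 6) :
    Function.Injective (FreeGroup.lift ![genA x z, genB x z]) := by
  have h : (Units.map (toMatrix hx hz).toMonoidHom).comp (FreeGroup.lift ![genA x z, genB x z]) =
      Matrix.SpecialLinearGroup.toGL.comp (FreeGroup.lift sanovGen) :=
    FreeGroup.ext_hom _ _ fun i => Units.ext (by
      fin_cases i <;> ext i j <;> fin_cases i <;> fin_cases j <;>
        simp [coe_sanovGen_zero, coe_sanovGen_one])
  refine .of_comp (f := Units.map (toMatrix hx hz).toMonoidHom) ?_
  rw [← MonoidHom.coe_comp, h]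
  exact Matrix.SpecialLinearGroup.toGL_injective.comp sanov_injective

end TraceAlgebra

namespace HGroup

open TraceAlgebra
open MvPolynomial (X eval₂Hom)

/-- The trace map of the Thue–Morse endomorphism on `ℤ[x, z]`, where `x = X 0` and `z = X 1`. -/
noncomputable def traceMap : MvPolynomial (Fin 2) ℤ →+* MvPolynomial (Fin 2) ℤ :=
  eval₂Hom (Int.castRingHom _) ![X 1, X 0 ^ 2 * X 1 - 2 * X 0 ^ 2 + 2]

theorem isTraceMap_traceMap : IsTraceMap traceMap (X 0) (X 1) :=
  ⟨by simp [traceMap], by simp [traceMap]⟩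

/-- Reduction of `ℤ[x, z]` modulo `p` at the point `(1, 1)`. -/
noncomputable def residue (p : ℕ) : MvPolynomial (Fin 2) ℤ →+* ZMod p :=
  eval₂Hom (Int.castRingHom _) 1

theorem residue_X {p : ℕ} (i : Fin 2) : residue p (X i) = 1 := by
  simp [residue]

theorem residue_traceMap (p : ℕ) (r : MvPolynomial (Fin 2) ℤ) :
    residue p (traceMap r) = residue p r := by
  refine DFunLike.congr_fun (f := (residue p).comp traceMap)
    (MvPolynomial.ringHom_ext (fun n => by simp [residue]) fun i => ?_) r
  fin_cases i <;> simp [residue, traceMap]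

/-- The ideal `(p, x - 1, z - 1)` of the fixed point `(1, 1)` of the trace map modulo `p`. -/
noncomputable def fixedPointIdeal (p : ℕ) : Ideal (MvPolynomial (Fin 2) ℤ) :=
  RingHom.ker (residue p)

theorem mem_fixedPointIdeal {p : ℕ} {r : MvPolynomial (Fin 2) ℤ} :
    r ∈ fixedPointIdeal p ↔ residue p r = 0 :=
  Iff.rfl

theorem fixedPointIdeal_pow_le_comap (p k : ℕ) :
    fixedPointIdeal p ^ k ≤ (fixedPointIdeal p ^ k).comap traceMap := by
  have h : fixedPointIdeal p ≤ (fixedPointIdeal p).comap traceMap := fun r hr => by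
    rwa [Ideal.mem_comap, mem_fixedPointIdeal, residue_traceMap]
  exact (Ideal.pow_right_mono h k).trans (Ideal.le_comap_pow traceMap k)

section Level

/-- The ring of scalars of the `k`-th finite quotient, `ℤ[x, z] / (p, x - 1, z - 1) ^ k`. -/
def Level (p k : ℕ) : Type := MvPolynomial (Fin 2) ℤ ⧸ fixedPointIdeal p ^ k

noncomputable instance (p k : ℕ) : CommRing (Level p k) := Ideal.Quotient.commRing _

instance (p k : ℕ) [NeZero p] : Finite (Level p k) :=
  have : Finite (MvPolynomial (Fin 2) ℤ ⧸ fixedPointIdeal p) :=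
    Finite.of_injective _ (RingHom.kerLift_injective (residue p))
  Ideal.finite_quotient_pow (IsNoetherian.noetherian _) k

/-- The reduction of scalars to `Level p k`. -/
noncomputable def toLevel (p k : ℕ) : MvPolynomial (Fin 2) ℤ →+* Level p k :=
  Ideal.Quotient.mk _

theorem ker_toLevel (p k : ℕ) : RingHom.ker (toLevel p k) = fixedPointIdeal p ^ k :=
  Ideal.mk_ker

/-- The reduction of the trace map to `Level p k`. -/
noncomputable def levelTraceMap (p k : ℕ) : Level p k →+* Level p k :=
  Ideal.quotientMap _ traceMap (fixedPointIdeal_pow_le_comap p k)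

theorem toLevel_traceMap (p k : ℕ) (r : MvPolynomial (Fin 2) ℤ) :
    toLevel p k (traceMap r) = levelTraceMap p k (toLevel p k r) :=
  rfl

theorem isTraceMap_levelTraceMap (p k : ℕ) :
    IsTraceMap (levelTraceMap p k) (toLevel p k (X 0)) (toLevel p k (X 1)) where
  map_x := by rw [← toLevel_traceMap, isTraceMap_traceMap.map_x]
  map_z := by simp [← toLevel_traceMap, isTraceMap_traceMap.map_z, map_ofNat]

theorem closure_toLevel_X_eq_top (p k : ℕ) :
    Subring.closure {toLevel p k (X 0), toLevel p k (X 1)} = ⊤ := by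
  rw [eq_top_iff]
  rintro r -
  obtain ⟨r, rfl⟩ : ∃ s, toLevel p k s = r := Ideal.Quotient.mk_surjective r
  induction r using MvPolynomial.induction_on with
  | C n =>
    rw [eq_intCast MvPolynomial.C n, map_intCast]
    exact intCast_mem _ n
  | add q r hq hr => exact map_add (toLevel p k) q r ▸ add_mem hq hr
  | mul_X q i hq =>
    rw [map_mul]
    refine mul_mem hq (Subring.subset_closure ?_)
    fin_cases i <;> simp

variable {p : ℕ}

theorem isNilpotent_toLevel (k : ℕ) {r : MvPolynomial (Fin 2) ℤ} (hr : residue p r = 0) :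
    IsNilpotent (toLevel p k r) :=
  ⟨k, by
    rw [← map_pow, ← RingHom.mem_ker, ker_toLevel]
    exact Ideal.pow_mem_pow (mem_fixedPointIdeal.mpr hr) k⟩

theorem isUnit_toLevel (k : ℕ) {r : MvPolynomial (Fin 2) ℤ} (hr : residue p r = 1) :
    IsUnit (toLevel p k r) := by
  simpa using (isNilpotent_toLevel k (show residue p (r - 1) = 0 by simp [hr])).isUnit_one_add

theorem isUnit_toLevel_X_one_sub_two (k : ℕ) : IsUnit (toLevel p k (X 1) - 2) := by
  have h : residue p (2 - X 1) = 1 := by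
    rw [map_sub, map_ofNat, residue_X]
    norm_num
  rw [← IsUnit.neg_iff]
  simpa [map_ofNat] using isUnit_toLevel k h

theorem levelTraceMap_surjective (k : ℕ) (hp : p.Prime) (hp2 : p ≠ 2) :
    Function.Surjective (levelTraceMap p k) := by
  refine (isTraceMap_levelTraceMap p k).surjective (closure_toLevel_X_eq_top p k) hp hp2 ?_ ?_ ?_
  · simpa using isNilpotent_toLevel k (show residue p (p : MvPolynomial (Fin 2) ℤ) = 0 by simp)
  · simpa using isNilpotent_toLevel k (show residue p (X 0 - 1) = 0 by simp [residue_X])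
  · simpa using isNilpotent_toLevel k (show residue p (X 1 - 1) = 0 by simp [residue_X])

/-- The trace algebra over `Level p k`. -/
abbrev LevelAlgebra (p k : ℕ) : Type :=
  TraceAlgebra (toLevel p k (X 0)) (toLevel p k (X 1))

/-- The generator `a` of the trace algebra over `Level p k`. -/
noncomputable abbrev levelGenA (p k : ℕ) : (LevelAlgebra p k)ˣ := genA _ _

/-- The generator `b` of the trace algebra over `Level p k`. -/
noncomputable abbrev levelGenB (p k : ℕ) : (LevelAlgebra p k)ˣ := genB _ _

/-- The Thue–Morse automorphism of the trace algebra over `Level p k`. -/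
noncomputable def levelAut (hp : p.Prime) (hp2 : p ≠ 2) (k : ℕ) : RingAut (LevelAlgebra p k) :=
  have : NeZero p := ⟨hp.ne_zero⟩
  thueMorseAut (isTraceMap_levelTraceMap p k) (isUnit_toLevel k (residue_X 0))
    (isUnit_toLevel_X_one_sub_two k) (levelTraceMap_surjective k hp hp2)

theorem levelAut_genA (k : ℕ) (hp : p.Prime) (hp2 : p ≠ 2) :
    levelAut hp hp2 k (levelGenA p k) = (levelGenA p k * levelGenB p k : LevelAlgebra p k) :=
  thueMorse_genA (isTraceMap_levelTraceMap p k)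

theorem levelAut_genB (k : ℕ) (hp : p.Prime) (hp2 : p ≠ 2) :
    levelAut hp hp2 k (levelGenB p k) = (levelGenB p k * levelGenA p k : LevelAlgebra p k) :=
  thueMorse_genB (isTraceMap_levelTraceMap p k)

/-- The action of `HGroup` on the trace algebra over `Level p k`. -/
noncomputable def levelRep (hp : p.Prime) (hp2 : p ≠ 2) (k : ℕ) :
    HGroup →* Equiv.Perm (LevelAlgebra p k) :=
  semilinearRep (levelAut_genA k hp hp2) (levelAut_genB k hp hp2)

theorem exists_levelRep_ofFree_ne_one (hp : p.Prime) (hp2 : p ≠ 2) {w : FreeGroup (Fin 2)}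
    (hw : w ≠ 1) (m : ℕ) : ∃ k ≥ m, levelRep hp hp2 k (ofFree w) ≠ 1 := by
  have : Fact p.Prime := ⟨hp⟩
  let f : MvPolynomial (Fin 2) ℤ →+* ℤ := MvPolynomial.eval ![2, 6]
  let u := FreeGroup.lift ![genA (X 0 : MvPolynomial (Fin 2) ℤ) (X 1), genB (X 0) (X 1)] w
  have hu : (u - 1 : TraceAlgebra (X 0 : MvPolynomial (Fin 2) ℤ) (X 1)) ≠ 0 := by
    rw [sub_ne_zero, Ne, Units.val_eq_one]
    exact (map_ne_one_iff _ (lift_gen_injective (f := f) (by simp [f]) (by simp [f]))).mpr hw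
  obtain ⟨k, hk, huk⟩ :=
    exists_notMem_coeffIdeal_pow (I := fixedPointIdeal p) (RingHom.ker_ne_top _) hu m
  refine ⟨k, hk, fun h => huk ?_⟩
  have h1 := DFunLike.congr_fun h 1
  rw [levelRep, semilinearRep_ofFree_apply, mul_one, Equiv.Perm.one_apply] at h1
  rw [← ker_toLevel, ← map_apply_eq_zero_iff (hx := rfl) (hz := rfl), map_sub, map_one, sub_eq_zero,
    map_lift_gen, h1]

/-- The reduction between two levels. -/
noncomputable def levelFactor (p : ℕ) {k m : ℕ} (h : m ≤ k) : Level p k →+* Level p m :=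
  Ideal.Quotient.factor (Ideal.pow_le_pow_right h)

theorem levelFactor_levelTraceMap (p : ℕ) {k m : ℕ} (h : m ≤ k) (r : Level p k) :
    levelFactor p h (levelTraceMap p k r) = levelTraceMap p m (levelFactor p h r) := by
  obtain ⟨r, rfl⟩ := Ideal.Quotient.mk_surjective r
  rfl

/-- The ideal `(p, x - 1, z - 1)` of `Level p k`. -/
noncomputable def levelIdeal (p k : ℕ) : Ideal (Level p k) :=
  (fixedPointIdeal p).map (toLevel p k)

theorem ker_levelFactor (p : ℕ) {k m : ℕ} (h : m ≤ k) :
    RingHom.ker (levelFactor p h) = levelIdeal p k ^ m := by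
  rw [levelIdeal, ← Ideal.map_pow]
  exact Ideal.Quotient.factor_ker (Ideal.pow_le_pow_right h)

theorem levelIdeal_pow_eq_bot (p k : ℕ) : levelIdeal p k ^ k = ⊥ := by
  rw [levelIdeal, ← Ideal.map_pow]
  exact Ideal.map_quotient_self _

theorem levelRep_sub_mem_coeffIdeal (hp : p.Prime) (hp2 : p ≠ 2) {k m : ℕ} (hmk : m ≤ k)
    {g : HGroup} (hg : levelRep hp hp2 m g = 1) (v : LevelAlgebra p k) :
    levelRep hp hp2 k g v - v ∈ coeffIdeal _ _ (levelIdeal p k) ^ m := by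
  have hnat := map_semilinearRep_apply
    (ha := levelAut_genA k hp hp2) (hb := levelAut_genB k hp hp2)
    (ha' := levelAut_genA m hp hp2) (hb' := levelAut_genB m hp hp2)
    (f := TraceAlgebra.map (levelFactor p hmk) rfl rfl) (map_genA _ _ _) (map_genB _ _ _)
    (map_thueMorse (isTraceMap_levelTraceMap p k) (isTraceMap_levelTraceMap p m) rfl rfl
      (levelFactor_levelTraceMap p hmk)) g v
  rw [← coeffIdeal_pow, ← ker_levelFactor p hmk, ← map_apply_eq_zero_iff (hx := rfl) (hz := rfl),
    map_sub, sub_eq_zero]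
  exact hnat.trans (DFunLike.congr_fun hg _)

theorem exists_levelRep_pow_prime_pow_eq_one (hp : p.Prime) (hp2 : p ≠ 2) {k : ℕ} (hk : 2 ≤ k)
    {g : HGroup} (hg : levelRep hp hp2 2 g = 1) : ∃ K, levelRep hp hp2 k g ^ p ^ K = 1 := by
  obtain ⟨u, φ, hu⟩ :=
    exists_semilinearRep_apply_eq (levelAut_genA k hp hp2) (levelAut_genB k hp hp2) g
  change ∀ v, levelRep hp hp2 k g v = u * φ v at hu
  have hnil : IsNilpotent (coeffIdeal (toLevel p k (X 0)) (toLevel p k (X 1)) (levelIdeal p k)) :=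
    ⟨k, by rw [← coeffIdeal_pow, levelIdeal_pow_eq_bot, coeffIdeal_bot, Ideal.zero_eq_bot]⟩
  have hpI : (p : Level p k) ∈ levelIdeal p k := by
    simpa [levelIdeal] using Ideal.mem_map_of_mem (toLevel p k)
      (mem_fixedPointIdeal.mpr (show residue p (p : MvPolynomial (Fin 2) ℤ) = 0 by simp))
  obtain ⟨K, hK⟩ := exists_iterate_mul_map_eq_id (u := u) (θ := (φ : LevelAlgebra p k →+* _))
    hp hnil (natCast_mem_coeffIdeal hpI) fun v => by
      simpa [hu] using levelRep_sub_mem_coeffIdeal hp hp2 hk hg v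
  refine ⟨K, DFunLike.coe_injective ?_⟩
  rw [← Equiv.Perm.iterate_eq_pow, show ⇑(levelRep hp hp2 k g) = _ from funext hu]
  exact hK

end Level

end HGroup

theorem hGroup_virtually_residually_five_general {p : ℕ} (hp : p.Prime) (hp2 : p ≠ 2) :
    ∃ H : Subgroup HGroup, H.FiniteIndex ∧ ResiduallyFiniteP p H := by
  have : NeZero p := ⟨hp.ne_zero⟩
  refine ⟨(HGroup.levelRep hp hp2 2).ker, inferInstance, .of_forall_exists_hom fun g hg => ?_⟩
  by_cases hsum : HGroup.exponentSum g = 1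
  · obtain ⟨n, w, hw⟩ := HGroup.exists_ofFree_eq_conj hsum
    have hw1 : w ≠ 1 := by
      rintro rfl
      rw [map_one, eq_comm, conj_eq_one_iff] at hw
      exact hg (Subtype.ext hw)
    obtain ⟨k, hk, hwk⟩ := HGroup.exists_levelRep_ofFree_ne_one hp hp2 hw1 2
    refine ⟨_, _, (HGroup.levelRep hp hp2 k).subgroupMap _, .of_isPGroup ?_, fun h => hwk ?_⟩
    · rintro ⟨_, y, hy, rfl⟩
      obtain ⟨K, hK⟩ := HGroup.exists_levelRep_pow_prime_pow_eq_one hp hp2 hk hy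
      exact ⟨K, Subtype.ext hK⟩
    · rw [hw, map_mul, map_mul, map_inv, show HGroup.levelRep hp hp2 k g = 1 from
        congrArg Subtype.val h, mul_one, mul_inv_cancel]
  · exact ⟨_, _, HGroup.exponentSum.comp (Subgroup.subtype _), .multiplicative_int hp.one_lt, hsum⟩

/-- The group `H = ⟨a, b, t ∣ t a t⁻¹ = ab, t b t⁻¹ = ba⟩` has a finite index subgroup that is
residually (finite 5). -/
theorem hGroup_virtually_residually_five :
    ∃ H : Subgroup HGroup, H.FiniteIndex ∧ ResiduallyFiniteP 5 ↥H :=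
  hGroup_virtually_residually_five_general Nat.prime_five (by norm_num)
end

section
/- Let 𝔽 be a field and let M = (M₁,…,Mₙ) be a polynomial self-map of affine n-space over 𝔽. Let I ⊆ 𝔽[x₁,…,xₙ] be the kernel of the induced ring endomorphism M* (f ↦ f∘M), and let T = (∂M_i/∂x_j) be the formal Jacobian matrix of M, viewed as an n×n matrix over the rational function field 𝔽(x₁,…,xₙ). If M is separable (i.e. the field 𝔽(x₁,…,xₙ) is a separable extension of its subfield 𝔽(M₁,…,Mₙ), the function field of the closure of the image of M), then the Krull dimension of the ring 𝔽[x₁,…,xₙ]/I equals the rank of the matrix T over 𝔽(x₁,…,xₙ). -/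
open MvPolynomial

noncomputable section

/-- The function field `𝔽(x₁,…,xₙ)` of affine `n`-space over `𝔽`. -/
abbrev FunctionField' (𝔽 : Type*) [Field 𝔽] (n : ℕ) : Type _ :=
  FractionRing (MvPolynomial (Fin n) 𝔽)

/-- The subfield `𝔽(M₁,…,Mₙ)` of `𝔽(x₁,…,xₙ)` generated by the constants and the
components of a polynomial self-map `M`. -/
def imageField (𝔽 : Type*) [Field 𝔽] (n : ℕ) (M : Fin n → MvPolynomial (Fin n) 𝔽) :
    Subfield (FunctionField' 𝔽 n) :=
  Subfield.closure
    ((Set.range fun c : 𝔽 => algebraMap (MvPolynomial (Fin n) 𝔽) (FunctionField' 𝔽 n) (C c)) ∪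
      (Set.range fun i : Fin n =>
        algebraMap (MvPolynomial (Fin n) 𝔽) (FunctionField' 𝔽 n) (M i)))

/-- `𝔽(x₁,…,xₙ)` is a separable (i.e. separably generated) extension of `𝔽(M₁,…,Mₙ)`:
there is a transcendence basis `s` over which the extension is separably algebraic. -/
def SeparableSelfMap (𝔽 : Type*) [Field 𝔽] (n : ℕ)
    (M : Fin n → MvPolynomial (Fin n) 𝔽) : Prop :=
  ∃ s : Set (FunctionField' 𝔽 n),
    AlgebraicIndependent ↥(imageField 𝔽 n M) ((↑) : s → FunctionField' 𝔽 n) ∧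
    Algebra.IsSeparable ↥(IntermediateField.adjoin ↥(imageField 𝔽 n M) s)
      (FunctionField' 𝔽 n)

/-!
Put `L = 𝔽(x₁,…,xₙ)` and `K = 𝔽(M₁,…,Mₙ)`. Noether normalization identifies the dimension of
`𝔽[x₁,…,xₙ]/I ≅ 𝔽[M₁,…,Mₙ]` with the transcendence degree of `K` over `𝔽`. In the basis
`dx₁,…,dxₙ` of `Ω[L⁄𝔽]` the rows of `T` are the differentials `dMᵢ`, and these span the kernel of
`Ω[L⁄𝔽] → Ω[L⁄K]`. A separating transcendence basis makes `Ω[L⁄K]` of dimension `trdeg K L`, so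
the rank of `T` is `trdeg 𝔽 L - trdeg K L = trdeg 𝔽 K`.
-/

section KrullDimension

variable {R S : Type*} [CommRing R] [CommRing S] [Algebra R S]

lemma ringKrullDim_le_of_isIntegral [Algebra.IsIntegral R S] :
    ringKrullDim S ≤ ringKrullDim R :=
  Order.krullDim_le_of_strictMono (PrimeSpectrum.comap (algebraMap R S)) fun _ _ h =>
    Ideal.IsIntegral.comap_lt_comap h

lemma ringKrullDim_le_of_hasGoingUp [Algebra.HasGoingUp R S]
    (hsurj : Function.Surjective (PrimeSpectrum.comap (algebraMap R S))) :
    ringKrullDim R ≤ ringKrullDim S := by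
  refine iSup_le fun l => ?_
  obtain ⟨P, hP⟩ := hsurj l.head
  have : P.asIdeal.LiesOver l.head.asIdeal := ⟨congrArg PrimeSpectrum.asIdeal hP.symm⟩
  obtain ⟨L, hL, -⟩ := Ideal.exists_ltSeries_of_hasGoingUp l P.asIdeal
  exact hL ▸ Order.LTSeries.length_le_krullDim L

lemma ringKrullDim_eq_of_isIntegral [Algebra.IsIntegral R S] [FaithfulSMul R S] :
    ringKrullDim R = ringKrullDim S :=
  (ringKrullDim_le_of_hasGoingUp (Algebra.IsIntegral.comap_surjective R S)).antisymm
    ringKrullDim_le_of_isIntegral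

end KrullDimension

section TranscendenceDegree

lemma ringKrullDim_eq_trdeg (F A : Type*) [Field F] [CommRing A] [IsDomain A] [Algebra F A]
    [Algebra.FiniteType F A] :
    ringKrullDim A = (Algebra.trdeg F A).toNat := by
  obtain ⟨r, g, hg, hint⟩ := exists_integral_inj_algHom_of_fg F A
  algebraize [g.toRingHom]
  have : Algebra.IsIntegral (MvPolynomial (Fin r) F) A := ⟨hint⟩
  have : FaithfulSMul (MvPolynomial (Fin r) F) A :=
    (faithfulSMul_iff_algebraMap_injective _ _).2 hg
  have hdim : ringKrullDim A = r := by
    rw [← ringKrullDim_eq_of_isIntegral (R := MvPolynomial (Fin r) F),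
      MvPolynomial.ringKrullDim_of_isNoetherianRing]
    simp
  have hbasis := (IsTranscendenceBasis.mvPolynomial (Fin r) F).algebraMap_comp (A := A)
  have htrdeg : (Algebra.trdeg F A).toNat = r := by
    simpa using (congrArg Cardinal.toNat hbasis.lift_cardinalMk_eq_trdeg).symm
  rw [hdim, htrdeg]

variable (F : Type*) {L : Type*} [Field F] [Field L] [Algebra F L]

open scoped IntermediateField.algebraAdjoinAdjoin in
lemma isAlgebraic_algebraAdjoin_intermediateFieldAdjoin (s : Set L) :
    Algebra.IsAlgebraic (Algebra.adjoin F s) (IntermediateField.adjoin F s) :=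
  IsLocalization.isAlgebraic _ (nonZeroDivisors (Algebra.adjoin F s))

open scoped IntermediateField.algebraAdjoinAdjoin in
lemma trdeg_intermediateField_adjoin (s : Set L) :
    Algebra.trdeg F (IntermediateField.adjoin F s) = Algebra.trdeg F (Algebra.adjoin F s) := by
  have := isAlgebraic_algebraAdjoin_intermediateFieldAdjoin F s
  rw [← trdeg_add_eq F (Algebra.adjoin F s) (A := IntermediateField.adjoin F s),
    trdeg_eq_zero (R := Algebra.adjoin F s), add_zero]

lemma ringKrullDim_quotient_ker_aeval {ι : Type*} [Finite ι] (m : ι → L) :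
    ringKrullDim (MvPolynomial ι F ⧸ RingHom.ker (aeval m : MvPolynomial ι F →ₐ[F] L)) =
      (Algebra.trdeg F (IntermediateField.adjoin F (Set.range m))).toNat := by
  have : Algebra.FiniteType F (Algebra.adjoin F (Set.range m)) :=
    (Subalgebra.fg_iff_finiteType _).1 (Subalgebra.fg_def.2 ⟨_, Set.finite_range m, rfl⟩)
  rw [trdeg_intermediateField_adjoin, ← ringKrullDim_eq_trdeg]
  exact ringKrullDim_eq_of_ringEquiv
    ((Ideal.quotientKerEquivRange (aeval m : MvPolynomial ι F →ₐ[F] L)).trans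
      (Subalgebra.equivOfEq _ _ (Algebra.adjoin_range_eq_range_aeval F m).symm)).toRingEquiv

end TranscendenceDegree

section Differentials

open KaehlerDifferential

section Generators

lemma ker_kaehlerDifferential_map (R A B : Type*) [CommRing R] [CommRing A] [CommRing B]
    [Algebra R A] [Algebra A B] [Algebra R B] [IsScalarTower R A B] :
    LinearMap.ker (map R A B B) =
      Submodule.span B (Set.range fun a : A => D R B (algebraMap A B a)) := by
  rw [← range_mapBaseChange, LinearMap.range_eq_map, ← Submodule.baseChange_top,
    ← span_range_derivation, Submodule.baseChange_span, Submodule.map_span, Set.image_image,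
    ← Set.range_comp]
  simp [Function.comp_def]

variable {F L : Type*} [Field F] [Field L] [Algebra F L] {s : Set L}

lemma D_mem_span_of_mem_adjoin {x : L} (hx : x ∈ IntermediateField.adjoin F s) :
    D F L x ∈ Submodule.span L (D F L '' s) := by
  induction hx using IntermediateField.adjoin_induction with
  | mem x hx => exact Submodule.subset_span (Set.mem_image_of_mem _ hx)
  | algebraMap c => rw [Derivation.map_algebraMap]; exact zero_mem _
  | add x y _ _ hx hy => rw [map_add]; exact add_mem hx hy
  | inv x _ hx => rw [Derivation.leibniz_inv]; exact Submodule.smul_mem _ _ hx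
  | mul x y _ _ hx hy =>
    rw [Derivation.leibniz]
    exact add_mem (Submodule.smul_mem _ _ hy) (Submodule.smul_mem _ _ hx)

variable (F s) in
lemma ker_kaehlerDifferential_map_adjoin :
    LinearMap.ker (map F (IntermediateField.adjoin F s) L L) =
      Submodule.span L (D F L '' s) := by
  rw [ker_kaehlerDifferential_map]
  refine le_antisymm (Submodule.span_le.2 ?_) (Submodule.span_mono ?_)
  · rintro _ ⟨a, rfl⟩
    exact D_mem_span_of_mem_adjoin a.2
  · rintro _ ⟨x, hx, rfl⟩
    exact ⟨⟨x, IntermediateField.subset_adjoin F s hx⟩, rfl⟩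

lemma finrank_span_D_eq_trdeg_adjoin [FinTrdeg F L]
    (hF : Module.rank L Ω[L⁄F] = Algebra.trdeg F L)
    (hs : Module.rank L Ω[L⁄IntermediateField.adjoin F s] =
      Algebra.trdeg (IntermediateField.adjoin F s) L) :
    Module.finrank L (Submodule.span L (D F L '' s)) =
      (Algebra.trdeg F (IntermediateField.adjoin F s)).toNat := by
  set K := IntermediateField.adjoin F s
  have hsum : Algebra.trdeg K L + Module.rank L (Submodule.span L (D F L '' s)) =
      Algebra.trdeg K L + Algebra.trdeg F K := calc
    _ = Module.rank L Ω[L⁄K] + Module.rank L (LinearMap.ker (map F K L L)) := by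
      rw [hs, ker_kaehlerDifferential_map_adjoin]
    _ = Module.rank L Ω[L⁄F] := by
      rw [← LinearMap.rank_range_add_rank_ker (map F K L L),
        LinearMap.range_eq_top.2 (map_surjective F K L), rank_top]
    _ = Algebra.trdeg K L + Algebra.trdeg F K := by rw [hF, ← trdeg_add_eq F K, add_comm]
  have hfin : Algebra.trdeg K L < Cardinal.aleph0 := by
    refine (trdeg_lt_aleph0 F L).trans_le' ?_
    rw [← trdeg_add_eq F K]
    exact le_add_self
  exact congrArg Cardinal.toNat (Cardinal.eq_of_add_eq_add_left hsum hfin)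

end Generators

section EtaleCoordinates

variable (R S σ : Type*) [CommRing R] [CommRing S] [Algebra R S]
  [Algebra (MvPolynomial σ R) S] [IsScalarTower R (MvPolynomial σ R) S]
  [Algebra.FormallyEtale (MvPolynomial σ R) S]

/-- The basis `(dxⱼ)` of `Ω[S⁄R]` for an algebra `S` formally étale over `R[xⱼ : j ∈ σ]`, such as
a localization of the polynomial ring. -/
def kaehlerBasisOfFormallyEtale : Module.Basis σ S Ω[S⁄R] :=
  ((mvPolynomialBasis R σ).baseChange S).map
    (tensorKaehlerEquivOfFormallyEtale R (MvPolynomial σ R) S)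

lemma kaehlerBasisOfFormallyEtale_repr_D (p : MvPolynomial σ R) (j : σ) :
    (kaehlerBasisOfFormallyEtale R S σ).repr (D R S (algebraMap _ S p)) j =
      algebraMap _ S (pderiv j p) := by
  rw [kaehlerBasisOfFormallyEtale, Module.Basis.map_repr, LinearEquiv.trans_apply,
    tensorKaehlerEquivOfFormallyEtale_symm_D_algebraMap, Module.Basis.baseChange_repr_tmul,
    mvPolynomialBasis_repr_apply, Algebra.smul_def, mul_one]

end EtaleCoordinates

lemma rank_jacobian_eq_finrank_span_D {R L σ ι : Type*} [CommRing R] [Field L] [Algebra R L]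
    [Algebra (MvPolynomial σ R) L] [IsScalarTower R (MvPolynomial σ R) L]
    [Algebra.FormallyEtale (MvPolynomial σ R) L] [Fintype σ] [Finite ι]
    (f : ι → MvPolynomial σ R) :
    (Matrix.of fun i j => algebraMap (MvPolynomial σ R) L (pderiv j (f i))).rank =
      Module.finrank L
        (Submodule.span L (D R L '' Set.range (algebraMap (MvPolynomial σ R) L ∘ f))) := by
  let b := kaehlerBasisOfFormallyEtale R L σ
  have hrow : (Matrix.of fun i j => algebraMap (MvPolynomial σ R) L (pderiv j (f i))).row =
      b.equivFun ∘ D R L ∘ algebraMap (MvPolynomial σ R) L ∘ f := by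
    funext i j
    exact (kaehlerBasisOfFormallyEtale_repr_D R L σ (f i) j).symm
  rw [Matrix.rank_eq_finrank_span_row, hrow, Set.range_comp, Set.range_comp,
    ← LinearEquiv.finrank_map_eq b.equivFun, Submodule.map_span]
  rfl

lemma rank_kaehlerDifferential_eq_trdeg_of_basis {K L ι : Type*} [Field K] [Field L] [Algebra K L]
    {x : ι → L} (hx : IsTranscendenceBasis K x) (b : Module.Basis ι L Ω[L⁄K]) :
    Module.rank L Ω[L⁄K] = Algebra.trdeg K L :=
  Cardinal.lift_injective (b.mk_eq_rank.symm.trans hx.lift_cardinalMk_eq_trdeg)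

/-- The family `x` is a separating transcendence basis of `L` over `K`: it is algebraically
independent and `L` is separable algebraic over `K(x)`. Maximality of the family is not a field, as
it follows from algebraicity. -/
structure IsSeparatingTranscendenceBasis (K : Type*) {L ι : Type*} [Field K] [Field L]
    [Algebra K L] (x : ι → L) : Prop where
  algebraicIndependent : AlgebraicIndependent K x
  isSeparable : Algebra.IsSeparable (IntermediateField.adjoin K (Set.range x)) L

namespace IsSeparatingTranscendenceBasis

variable {K L ι : Type*} [Field K] [Field L] [Algebra K L] {x : ι → L}

open scoped IntermediateField.algebraAdjoinAdjoin in
lemma isTranscendenceBasis (hx : IsSeparatingTranscendenceBasis K x) :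
    IsTranscendenceBasis K x := by
  have := hx.isSeparable
  have := isAlgebraic_algebraAdjoin_intermediateFieldAdjoin K (Set.range x)
  exact hx.algebraicIndependent.isTranscendenceBasis_iff_isAlgebraic.2
    (.trans _ (IntermediateField.adjoin K (Set.range x)) _)

-- `aeval x` factors as the localization `K[X] → K(X) ≅ K(x)` followed by the separable `K(x) ⊆ L`.
lemma formallyEtale_aeval (hx : IsSeparatingTranscendenceBasis K x) :
    (aeval x : MvPolynomial ι K →ₐ[K] L).toRingHom.FormallyEtale := by
  let e := hx.algebraicIndependent.aevalEquivField
  have hfrac : (algebraMap (MvPolynomial ι K) (FractionRing (MvPolynomial ι K))).FormallyEtale :=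
    RingHom.formallyEtale_algebraMap.2 (.of_isLocalization (nonZeroDivisors (MvPolynomial ι K)))
  have he : e.toRingHom.FormallyEtale := by
    algebraize [e.toRingHom]
    exact .of_equiv (AlgEquiv.ofBijective (Algebra.ofId _ _) e.bijective)
  have := hx.isSeparable
  have hsep : (algebraMap (IntermediateField.adjoin K (Set.range x)) L).FormallyEtale :=
    RingHom.formallyEtale_algebraMap.2 (.of_isSeparable _ _)
  convert (hfrac.comp he).comp hsep using 1
  exact RingHom.ext fun p => (hx.algebraicIndependent.aevalEquivField_algebraMap_apply_coe p).symm

lemma rank_kaehlerDifferential (hx : IsSeparatingTranscendenceBasis K x) :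
    Module.rank L Ω[L⁄K] = Algebra.trdeg K L := by
  let f : MvPolynomial ι K →ₐ[K] L := aeval x
  algebraize [f.toRingHom]
  have : Algebra.FormallyEtale (MvPolynomial ι K) L := hx.formallyEtale_aeval
  exact rank_kaehlerDifferential_eq_trdeg_of_basis hx.isTranscendenceBasis
    (kaehlerBasisOfFormallyEtale K L ι)

end IsSeparatingTranscendenceBasis

end Differentials

open KaehlerDifferential in
theorem krullDim_quotient_ker_eq_rank_jacobian_general {F L σ ι κ : Type*} [Field F] [Fintype σ]
    [Finite ι] [Field L] [Algebra F L] [Algebra (MvPolynomial σ F) L]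
    [IsScalarTower F (MvPolynomial σ F) L] [IsFractionRing (MvPolynomial σ F) L]
    (f : ι → MvPolynomial σ F) {t : κ → L}
    (ht : IsSeparatingTranscendenceBasis
      (IntermediateField.adjoin F (Set.range (algebraMap (MvPolynomial σ F) L ∘ f))) t) :
    ringKrullDim (MvPolynomial ι F ⧸
        RingHom.ker (aeval f : MvPolynomial ι F →ₐ[F] MvPolynomial σ F)) =
      (Matrix.of fun i j => algebraMap (MvPolynomial σ F) L (pderiv j (f i))).rank := by
  have hker : RingHom.ker (aeval f : MvPolynomial ι F →ₐ[F] MvPolynomial σ F) =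
      RingHom.ker (aeval (algebraMap (MvPolynomial σ F) L ∘ f) : MvPolynomial ι F →ₐ[F] L) := by
    ext p
    rw [RingHom.mem_ker, RingHom.mem_ker, aeval_algebraMap_apply,
      FaithfulSMul.algebraMap_eq_zero_iff]
  have : Algebra.FormallyEtale (MvPolynomial σ F) L := .of_isLocalization (nonZeroDivisors _)
  have : Algebra.IsAlgebraic (MvPolynomial σ F) L :=
    IsLocalization.isAlgebraic _ (nonZeroDivisors _)
  have hX := (IsTranscendenceBasis.mvPolynomial σ F).algebraMap_comp (A := L)
  have := FinTrdeg.of_isTranscendenceBasis hX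
  have hF : Module.rank L Ω[L⁄F] = Algebra.trdeg F L :=
    rank_kaehlerDifferential_eq_trdeg_of_basis hX (kaehlerBasisOfFormallyEtale F L σ)
  rw [hker, ringKrullDim_quotient_ker_aeval, rank_jacobian_eq_finrank_span_D,
    finrank_span_D_eq_trdeg_adjoin hF ht.rank_kaehlerDifferential]

/-- If the polynomial self-map `M` of affine `n`-space over a field `𝔽` is separable, then the
Krull dimension of `𝔽[x₁,…,xₙ]/I`, where `I = ker M*` is the vanishing ideal of the closure of
the image of `M`, equals the rank of the formal Jacobian matrix `T = (∂M_i/∂x_j)` over the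
rational function field `𝔽(x₁,…,xₙ)`. -/
theorem krullDim_quotient_ker_eq_rank_jacobian (𝔽 : Type*) [Field 𝔽] (n : ℕ)
    (M : Fin n → MvPolynomial (Fin n) 𝔽) (hM : SeparableSelfMap 𝔽 n M) :
    ringKrullDim (MvPolynomial (Fin n) 𝔽 ⧸
        RingHom.ker (MvPolynomial.aeval M :
          MvPolynomial (Fin n) 𝔽 →ₐ[𝔽] MvPolynomial (Fin n) 𝔽)) =
      ((Matrix.of fun i j : Fin n =>
        algebraMap (MvPolynomial (Fin n) 𝔽) (FunctionField' 𝔽 n)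
          (pderiv j (M i))).rank : ℕ) := by
  obtain ⟨s, hs, hsep⟩ := hM
  -- `imageField 𝔽 n M` unfolds to `IntermediateField.adjoin 𝔽 (Set.range _)`.
  exact krullDim_quotient_ker_eq_rank_jacobian_general (L := FunctionField' 𝔽 n) M
    (t := ((↑) : s → FunctionField' 𝔽 n))
    ⟨hs, by rw [Subtype.range_coe]; exact hsep⟩

end
end

section
/- Let Φ be an n-variable polynomial self-map of affine n-space with integer coefficients, let V be the Zariski closure over ℤ of the image of Φⁿ (the subscheme defined by the kernel I(V(ℤ)) of (Φ*)ⁿ on ℤ[x₁,…,xₙ]), and let W be a proper closed subscheme of V. Then for every sufficiently large prime p there exist q = p^l, a positive integer a, and a point x ∈ V(𝔽_q) ∖ W(𝔽_q) such that for every X ∈ V(ℤ_q) with π(X) = x and every k ≥ 1, Φ^{a·p^k}(X) ≡ X (mod p^k). In particular, the point X is uniformly recurrent for Φ in the p-adic topology on V(ℤ_q). -/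
open MvPolynomial

noncomputable section

/-- The substitution endomorphism `Φ* : f ↦ f ∘ Φ` of the polynomial ring `R[x₁,…,xₙ]`
induced by an `n`-tuple `Φ` of polynomials. -/
def substEnd (R : Type*) [CommRing R] {n : ℕ} (Φ : Fin n → MvPolynomial (Fin n) R) :
    MvPolynomial (Fin n) R →ₐ[R] MvPolynomial (Fin n) R :=
  MvPolynomial.aeval Φ

/-- The ideal `I(V(R))`: the kernel of the `n`-th power `(Φ*)ⁿ` of the substitution
endomorphism; `V` is the Zariski closure of the image of `Φⁿ`. -/
def iterKer (R : Type*) [CommRing R] {n : ℕ} (Φ : Fin n → MvPolynomial (Fin n) R) :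
    Ideal (MvPolynomial (Fin n) R) :=
  RingHom.ker (substEnd R Φ ^ n)

/-- The polynomial self-map of `Rⁿ` defined by an `n`-tuple of polynomials. -/
def polySelfMap {R : Type*} [CommRing R] {n : ℕ} (Φ : Fin n → MvPolynomial (Fin n) R) :
    (Fin n → R) → (Fin n → R) :=
  fun v i => eval v (Φ i)

/-- `ℤ_q`: the ring of integers of the unramified extension of `ℚ_p` with residue field
`𝔽_q`, `q = p^l`, realized as the ring of Witt vectors of `𝔽_q`. -/
abbrev Zq (p l : ℕ) [Fact p.Prime] : Type _ := WittVector p (GaloisField p l)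

/-!
Let `σ = Φ*`. The transcendence degree of the image of `σ ^ j` drops until it stabilises, after
at most `n` steps, so `σ` is injective on the image of `σ ^ n` and each coordinate function on
`V` is algebraic over the coordinates of `Φ`. A separable algebraic relation makes `Φ` injective
modulo every power of `p`, within a residue class of `V` on which a certain `δ` is nonzero.

Points of `V` with `Φ(x) = x ^ q` and `δ(x) ≠ 0` (and outside `W`) exist over finite fields of
large characteristic: in the finite algebra `𝔽_p[x₁,…,xₙ] / (xᵢ ^ q - Φᵢ)` nonzero polynomials of
degree less than `q` survive, while a nilpotent `D` would force `D ∘ Φⁿ = D ^ (q ^ n)` to vanish.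
Such an `x` is periodic under `Φ`.

Let `T` be an iterate of `Φ` that fixes `x` and whose derivative `M` is idempotent modulo `p`. If
`T X ≡ X (mod p ^ k)` on the residue class of `x`, then the displacements along the orbit of
`T X` all agree with `M (T X - X)` modulo `p ^ (k + 1)`; adding up `p` of them gives
`T ^ p (T X) ≡ T X`, and injectivity gives `T ^ p X ≡ X (mod p ^ (k + 1))`.
-/

section TranscendenceDegree

universe u v

variable {R : Type u} [CommRing R]

theorem injective_of_surjective_of_trdeg_le {A B : Type v} [CommRing A] [IsDomain A]
    [CommRing B] [IsDomain B] [Algebra R A] [Algebra R B] [FaithfulSMul R B]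
    (f : A →ₐ[R] B) (hf : Function.Surjective f)
    (hfin : Algebra.trdeg R A < Cardinal.aleph0)
    (hle : Algebra.trdeg R A ≤ Algebra.trdeg R B) : Function.Injective f := by
  have : Nontrivial R := (algebraMap R B).domain_nontrivial
  obtain ⟨ι, b, hb⟩ := exists_isTranscendenceBasis' R B
  choose y hy using fun i => hf (b i)
  have hfy : f ∘ y = b := funext hy
  have hy_basis : IsTranscendenceBasis R y :=
    (AlgebraicIndependent.of_comp f (hfy ▸ hb.1)).isTranscendenceBasis_of_trdeg_le hfin
      (hle.trans_eq hb.cardinalMk_eq_trdeg.symm)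
  -- A nonzero ideal of `A` meets the polynomials in `y`, on which `f` is injective.
  rw [injective_iff_map_eq_zero]
  intro a ha
  by_contra hne
  refine Ideal.comap_ne_bot_of_algebraic_mem (I := RingHom.ker f) hne ha
    (hy_basis.isAlgebraic.isAlgebraic a) ((Submodule.eq_bot_iff _).2 ?_)
  rintro ⟨c, hc⟩ (hfc : f c = 0)
  rw [Algebra.adjoin_range_eq_range_aeval] at hc
  obtain ⟨P, rfl⟩ := hc
  have hP : aeval b P = 0 := by rw [← hfy, ← hfc]; exact (comp_aeval_apply (φ := f) y P).symm
  obtain rfl : P = 0 := hb.1 (hP.trans (map_zero _).symm)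
  exact Subtype.ext (map_zero (aeval y))

variable {A : Type v} [CommRing A] [Algebra R A]

theorem trdeg_map_lt_of_not_injOn [IsDomain A] [FaithfulSMul R A] (f : A →ₐ[R] A)
    {S : Subalgebra R A} (hS : Algebra.trdeg R S < Cardinal.aleph0) (hf : ¬ Set.InjOn f S) :
    Algebra.trdeg R (S.map f) < Algebra.trdeg R S := by
  contrapose! hf
  have : FaithfulSMul R (S.map f) := .tower_bot R (S.map f) A
  have hinj := injective_of_surjective_of_trdeg_le _ (AlgHom.subalgebraMap_surjective S f) hS hf
  exact fun a ha b hb hab =>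
    congrArg Subtype.val (hinj (a₁ := ⟨a, ha⟩) (a₂ := ⟨b, hb⟩) (Subtype.ext hab))

theorem isAlgebraic_of_mem_of_trdeg_le [IsDomain A] [FaithfulSMul R A] {S T : Subalgebra R A}
    (hST : S ≤ T) (hfin : Algebra.trdeg R S < Cardinal.aleph0)
    (hle : Algebra.trdeg R T ≤ Algebra.trdeg R S) {z : A} (hz : z ∈ T) : IsAlgebraic S z := by
  have : Nontrivial R := (algebraMap R A).domain_nontrivial
  let := (Subalgebra.inclusion hST).toAlgebra
  have : IsScalarTower R S T := .of_algebraMap_eq fun _ => rfl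
  have : IsScalarTower S T A := .of_algebraMap_eq fun _ => rfl
  have : FaithfulSMul R S := .tower_bot R S A
  have : FaithfulSMul S T := .tower_bot S T A
  have hadd : Algebra.trdeg R S + Algebra.trdeg S T = Algebra.trdeg R S + 0 := by
    refine le_antisymm ?_ (by gcongr; exact zero_le)
    rwa [trdeg_add_eq, add_zero]
  have : Algebra.IsAlgebraic S T :=
    trdeg_eq_zero_iff.1 (Cardinal.eq_of_add_eq_add_left hadd hfin)
  exact (this.isAlgebraic ⟨z, hz⟩).algHom (IsScalarTower.toAlgHom S T A)

variable (σ : A →ₐ[R] A)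

theorem range_pow_succ (j : ℕ) : (σ ^ (j + 1)).range = (σ ^ j).range.map σ := by
  rw [pow_succ', ← AlgHom.range_comp]
  rfl

theorem antitone_range_pow : Antitone fun j => (σ ^ j).range := by
  refine antitone_nat_of_succ_le fun j => ?_
  rw [pow_succ]
  exact AlgHom.range_comp_le_range σ (σ ^ j)

variable {σ} {n : ℕ}

theorem trdeg_subalgebra_lt_aleph0 (hA : Algebra.trdeg R A ≤ n) (S : Subalgebra R A) :
    Algebra.trdeg R S < Cardinal.aleph0 :=
  ((trdeg_le_of_injective S.val Subtype.val_injective).trans hA).trans_lt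
    Cardinal.natCast_lt_aleph0

theorem injOn_range_pow [IsDomain A] [FaithfulSMul R A] (hA : Algebra.trdeg R A ≤ n) :
    Set.InjOn σ (σ ^ n).range := by
  by_contra hn
  have hdrop : ∀ j ≤ n + 1, Algebra.trdeg R (σ ^ j).range + j ≤ n := by
    intro j hj
    induction j with
    | zero =>
      simpa using (trdeg_le_of_injective (σ ^ 0).range.val Subtype.val_injective).trans hA
    | succ j ih =>
      have hlt := trdeg_map_lt_of_not_injOn σ (trdeg_subalgebra_lt_aleph0 hA (σ ^ j).range)
        fun h => hn (h.mono (antitone_range_pow σ (Nat.le_of_succ_le_succ hj)))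
      rw [← range_pow_succ] at hlt
      calc Algebra.trdeg R (σ ^ (j + 1)).range + (j + 1 : ℕ)
          = (Algebra.trdeg R (σ ^ (j + 1)).range + 1) + j := by push_cast; ring
        _ ≤ Algebra.trdeg R (σ ^ j).range + j := by
            gcongr
            exact Cardinal.add_one_le_of_lt hlt
        _ ≤ n := ih (Nat.le_of_succ_le hj)
  have : ((n + 1 : ℕ) : Cardinal) ≤ n := le_add_self.trans (hdrop (n + 1) le_rfl)
  exact n.not_succ_le_self (Nat.cast_le.1 this)

theorem isAlgebraic_range_pow_succ [IsDomain A] [FaithfulSMul R A]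
    (hA : Algebra.trdeg R A ≤ n) (a : A) :
    IsAlgebraic (σ ^ (n + 1)).range ((σ ^ n) a) := by
  have hinj : Function.Injective (AlgHom.subalgebraMap (σ ^ n).range σ) := fun x y hxy =>
    Subtype.ext (injOn_range_pow hA x.2 y.2 (congrArg Subtype.val hxy))
  have hle := trdeg_le_of_injective _ hinj
  rw [← range_pow_succ] at hle
  exact isAlgebraic_of_mem_of_trdeg_le (antitone_range_pow σ n.le_succ)
    (trdeg_subalgebra_lt_aleph0 hA _) hle ⟨a, rfl⟩

theorem exists_aeval_eq_zero_aeval_derivative_ne_zero {C : Type*} [CommRing C] [IsDomain C]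
    [CharZero C] [Algebra C A] [FaithfulSMul C A] {z : A} (hz : IsAlgebraic C z) :
    ∃ P : Polynomial C, Polynomial.aeval z P = 0 ∧ Polynomial.aeval z P.derivative ≠ 0 := by
  obtain ⟨P, hP, hPz⟩ := hz
  induction hd : P.natDegree using Nat.strong_induction_on generalizing P with
  | _ d ih =>
    by_cases h : Polynomial.aeval z P.derivative = 0
    · have hdeg : P.natDegree ≠ 0 := by
        intro h0
        rw [Polynomial.eq_C_of_natDegree_eq_zero h0] at hP hPz
        simp_all
      exact ih _ (hd ▸ Polynomial.natDegree_derivative_lt hdeg) P.derivative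
        (fun h0 => hdeg (Polynomial.derivative_eq_zero.1 h0)) h rfl
    · exact ⟨P, hPz, h⟩

theorem exists_pow_eval₂_eq_zero_pow_eval₂_derivative_ne_zero [IsDomain A] [CharZero A]
    [FaithfulSMul R A] (hA : Algebra.trdeg R A ≤ n) (σ : A →ₐ[R] A) (z : A) :
    ∃ Q : Polynomial A, (σ ^ n) (Q.eval₂ σ z) = 0 ∧ (σ ^ n) (Q.derivative.eval₂ σ z) ≠ 0 := by
  obtain ⟨P, hP, hP'⟩ :=
    exists_aeval_eq_zero_aeval_derivative_ne_zero (isAlgebraic_range_pow_succ (σ := σ) hA z)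
  obtain ⟨Q, rfl⟩ := Polynomial.map_surjective (σ ^ (n + 1)).rangeRestrict.toRingHom
    (σ ^ (n + 1)).rangeRestrict_surjective P
  have haeval (F : Polynomial A) :
      Polynomial.aeval ((σ ^ n) z) (F.map (σ ^ (n + 1)).rangeRestrict.toRingHom) =
        (σ ^ n) (F.eval₂ σ z) := by
    rw [Polynomial.aeval_def, Polynomial.eval₂_map]
    exact (Polynomial.hom_eval₂ F (σ : A →+* A) (RingHomClass.toRingHom (σ ^ n)) z).symm
  refine ⟨Q, ?_, ?_⟩
  · rw [← haeval, hP]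
  · rwa [← haeval, ← Polynomial.derivative_map]

end TranscendenceDegree

section CongruenceDynamics

open scoped Matrix

variable {O ι : Type*} [CommRing O]

/-- The vectors with all coordinates in `I ^ k`; thus `X ≡ Y (mod I ^ k)` is written
`X - Y ∈ piPow I k`. -/
abbrev piPow (I : Ideal O) (k : ℕ) : Ideal (ι → O) := Ideal.pi fun _ => I ^ k

variable {I : Ideal O} {k : ℕ} {S : Set (ι → O)} {T : (ι → O) → ι → O}

theorem piPow_anti (I : Ideal O) : Antitone (piPow (ι := ι) I) :=
  fun _ _ h _ hv i => Ideal.pow_le_pow_right h (hv i)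

/-- `T` is injective on `S` modulo every power of `I`. -/
def InjModPowOn (I : Ideal O) (T : (ι → O) → ι → O) (S : Set (ι → O)) : Prop :=
  ∀ ⦃k X Y⦄, X ∈ S → Y ∈ S → T X - T Y ∈ piPow I k → X - Y ∈ piPow I k

theorem InjModPowOn.iterate {S : ℕ → Set (ι → O)} (h : ∀ j, InjModPowOn I T (S j))
    (hS : ∀ j, Set.MapsTo T (S j) (S (j + 1))) (j : ℕ) : InjModPowOn I T^[j] (S 0) := by
  induction j generalizing S with
  | zero => exact fun _ _ _ _ _ => id
  | succ j ih =>
    exact fun k X Y hX hY hXY =>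
      h 0 hX hY (ih (fun i => h (i + 1)) (fun i => hS (i + 1)) (hS 0 hX) (hS 0 hY) hXY)

variable [Fintype ι]

theorem mulVec_mem_piPow (M : Matrix ι ι O) {v : ι → O} (hv : v ∈ piPow I k) :
    M *ᵥ v ∈ piPow I k :=
  fun i => sum_mem fun j _ => Ideal.mul_mem_left _ (M i j) (hv j)

theorem mulVec_mem_piPow_succ {M : Matrix ι ι O} (hM : ∀ i j, M i j ∈ I) {v : ι → O}
    (hv : v ∈ piPow I k) : M *ᵥ v ∈ piPow I (k + 1) := by
  refine fun i => sum_mem fun j _ => ?_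
  rw [pow_succ']
  exact Ideal.mul_mem_mul (hM i j) (hv j)

/-- `M` is a derivative of `T` at all points of `S` simultaneously, to first order in the
`I`-adic filtration: `T Y ≡ T X + M (Y - X) (mod I ^ (k + 1))` whenever `Y ≡ X (mod I ^ k)`,
`k ≥ 1`. -/
def HasDerivModOn (I : Ideal O) (T : (ι → O) → ι → O) (M : Matrix ι ι O)
    (S : Set (ι → O)) : Prop :=
  ∀ ⦃k X Y⦄, X ∈ S → Y ∈ S → Y - X ∈ piPow I (k + 1) →
    T Y - T X - M *ᵥ (Y - X) ∈ piPow I (k + 2)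

namespace HasDerivModOn

variable {M : Matrix ι ι O}

theorem sub_mem (h : HasDerivModOn I T M S) {X Y : ι → O} (hX : X ∈ S) (hY : Y ∈ S)
    (hXY : Y - X ∈ piPow I (k + 1)) : T Y - T X ∈ piPow I (k + 1) := by
  simpa using add_mem (piPow_anti I (k + 1).le_succ (h hX hY hXY)) (mulVec_mem_piPow M hXY)

theorem iterate [DecidableEq ι] (h : HasDerivModOn I T M S) (hS : Set.MapsTo T S S) (j : ℕ) :
    HasDerivModOn I T^[j] (M ^ j) S := by
  induction j with
  | zero => intro k X Y _ _ _; simp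
  | succ j ih =>
    intro k X Y hX hY hXY
    have hT := h (hS.iterate j hX) (hS.iterate j hY) (ih.sub_mem hX hY hXY)
    have hsum := add_mem hT (mulVec_mem_piPow M (ih hX hY hXY))
    rw [Matrix.mulVec_sub M (T^[j] Y - T^[j] X), Matrix.mulVec_mulVec, ← pow_succ'] at hsum
    simpa only [Function.iterate_succ', Function.comp_apply, sub_add_sub_cancel] using hsum

/-- The displacements along an orbit settle after one step, because `M` is idempotent
modulo `I`. -/
theorem iterate_sub_iterate_sub_mulVec_mem (h : HasDerivModOn I T M S)
    (hS : Set.MapsTo T S S) (hM : ∀ i j, (M * M - M) i j ∈ I)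
    (hT : ∀ X ∈ S, T X - X ∈ piPow I (k + 1)) {X : ι → O} (hX : X ∈ S) (j : ℕ) :
    T^[j + 1] (T X) - T^[j] (T X) - M *ᵥ (T X - X) ∈ piPow I (k + 2) := by
  induction j with
  | zero => exact h hX (hS hX) (hT X hX)
  | succ j ih =>
    set Y := T^[j] (T X)
    have hY : Y ∈ S := hS.iterate j (hS hX)
    have hTY := h hY (hS hY) (hT Y hY)
    rw [Function.iterate_succ_apply'] at ih
    have hsum := add_mem (add_mem hTY (mulVec_mem_piPow M ih))
      (mulVec_mem_piPow_succ hM (hT X hX))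
    rw [Matrix.mulVec_sub M (T Y - Y), Matrix.mulVec_mulVec, Matrix.sub_mulVec] at hsum
    rw [Function.iterate_succ_apply', Function.iterate_succ_apply']
    simpa using hsum

theorem iterate_sub_self_mem (h : HasDerivModOn I T M S) (hS : Set.MapsTo T S S)
    (hM : ∀ i j, (M * M - M) i j ∈ I) (hinj : InjModPowOn I T S) {p : ℕ} (hp : (p : O) ∈ I)
    (hT : ∀ X ∈ S, T X - X ∈ piPow I (k + 1)) {X : ι → O} (hX : X ∈ S) :
    T^[p] X - X ∈ piPow I (k + 2) := by
  have hsum : T^[p] (T X) - T X - p • M *ᵥ (T X - X) ∈ piPow I (k + 2) := by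
    have := sum_mem fun j (_ : j ∈ Finset.range p) =>
      h.iterate_sub_iterate_sub_mulVec_mem hS hM hT hX j
    rwa [Finset.sum_sub_distrib, Finset.sum_range_sub fun j => T^[j] (T X), Finset.sum_const,
      Finset.card_range] at this
  have hpM : p • M *ᵥ (T X - X) ∈ piPow I (k + 2) := by
    intro i
    rw [Pi.smul_apply, nsmul_eq_mul, pow_succ']
    exact Ideal.mul_mem_mul hp (mulVec_mem_piPow M (hT X hX) i)
  have hTX := add_mem hsum hpM
  rw [sub_add_cancel, ← Function.iterate_succ_apply, Function.iterate_succ_apply'] at hTX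
  exact hinj (hS.iterate p hX) hX hTX

theorem iterate_pow_sub_self_mem [DecidableEq ι] {K : Type*} [CommRing K] {π : O →+* K}
    (h : HasDerivModOn (RingHom.ker π) T M S) (hS : Set.MapsTo T S S)
    (hM : IsIdempotentElem (π.mapMatrix M)) (hinj : InjModPowOn (RingHom.ker π) T S)
    {p : ℕ} (hp : (p : K) = 0) (hT : ∀ X ∈ S, T X - X ∈ piPow (RingHom.ker π) 1) (k : ℕ)
    {X : ι → O} (hX : X ∈ S) : T^[p ^ k] X - X ∈ piPow (RingHom.ker π) (k + 1) := by
  induction k generalizing X with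
  | zero => simpa using hT X hX
  | succ k ih =>
    have hM' : π.mapMatrix (M ^ p ^ k * M ^ p ^ k - M ^ p ^ k) = 0 := by
      rw [map_sub, map_mul, map_pow, (hM.pow (p ^ k)).eq, sub_self]
    rw [pow_succ, Function.iterate_mul]
    exact (h.iterate hS (p ^ k)).iterate_sub_self_mem (hS.iterate _)
      (fun i j => congrFun (congrFun hM' i) j)
      (.iterate (S := fun _ => S) (fun _ => hinj) (fun _ => hS) _)
      (by rwa [RingHom.mem_ker, map_natCast]) (fun Y => ih) hX

end HasDerivModOn

end CongruenceDynamics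

section PolynomialMaps

variable {R : Type*} [CommRing R]

section Congruence

variable {O ι : Type*} [CommRing O] [Algebra R O] {J : Ideal O} {X Y : ι → O}

theorem aeval_sub_aeval_mem (h : ∀ i, Y i - X i ∈ J) (f : MvPolynomial ι R) :
    aeval Y f - aeval X f ∈ J := by
  have hXY : (Ideal.Quotient.mkₐ R J) ∘ Y = (Ideal.Quotient.mkₐ R J) ∘ X :=
    funext fun i => Ideal.Quotient.eq.2 (h i)
  refine Ideal.Quotient.eq.1 ?_
  change Ideal.Quotient.mkₐ R J _ = Ideal.Quotient.mkₐ R J _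
  rw [comp_aeval_apply, comp_aeval_apply]
  exact congrArg (fun Z => aeval Z f) hXY

theorem aeval_sub_aeval_sub_sum_pderiv_mem_sq [Fintype ι] (h : ∀ i, Y i - X i ∈ J)
    (f : MvPolynomial ι R) :
    aeval Y f - aeval X f - ∑ j, aeval X (pderiv j f) * (Y j - X j) ∈ J ^ 2 := by
  classical
  induction f using MvPolynomial.induction_on with
  | C a => simp
  | add f g hf hg =>
    convert add_mem hf hg using 1
    simp only [map_add, add_mul, Finset.sum_add_distrib]
    ring
  | mul_X f i hf =>
    convert add_mem (Ideal.mul_mem_right (X i) _ hf)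
      (pow_two J ▸ Ideal.mul_mem_mul (aeval_sub_aeval_mem h f) (h i)) using 1
    have hsum : ∑ j, aeval X (pderiv j (f * MvPolynomial.X i)) * (Y j - X j) =
        (∑ j, aeval X (pderiv j f) * (Y j - X j)) * X i + aeval X f * (Y i - X i) := by
      have hpd (j : ι) : aeval X (pderiv j (f * MvPolynomial.X i)) * (Y j - X j) =
          aeval X (pderiv j f) * (Y j - X j) * X i +
            if i = j then aeval X f * (Y j - X j) else 0 := by
        rw [Derivation.leibniz, pderiv_X, Pi.single_apply]
        split_ifs <;> simp <;> ring
      simp_rw [hpd]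
      rw [Finset.sum_add_distrib, Finset.sum_mul, Finset.sum_ite_eq Finset.univ,
        if_pos (Finset.mem_univ i)]
    rw [hsum]
    simp only [map_mul, aeval_X]
    ring

end Congruence

variable {n : ℕ} {O : Type*} [CommRing O] [Algebra R O]

/-- The self-map of `Oⁿ` given by a tuple of polynomials over `R`, for an `R`-algebra `O`. -/
def pointMap (O : Type*) [CommRing O] [Algebra R O] (Φ : Fin n → MvPolynomial (Fin n) R)
    (X : Fin n → O) : Fin n → O :=
  fun i => aeval X (Φ i)

/-- The set `V(O)` of `O`-points of the Zariski closure `V` of the image of `Φⁿ`. -/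
def closurePoints (O : Type*) [CommRing O] [Algebra R O] (Φ : Fin n → MvPolynomial (Fin n) R) :
    Set (Fin n → O) :=
  {X | ∀ G ∈ iterKer R Φ, aeval X G = 0}

theorem eval_map_algebraMap_eq_aeval {σ : Type*} (X : σ → O) (f : MvPolynomial σ R) :
    eval X (map (algebraMap R O) f) = aeval X f := by
  rw [eval_map, aeval_def]

variable (Φ : Fin n → MvPolynomial (Fin n) R)

theorem aeval_pointMap (X : Fin n → O) (f : MvPolynomial (Fin n) R) :
    aeval (pointMap O Φ X) f = aeval X (substEnd R Φ f) :=
  (comp_aeval_apply (φ := aeval X) Φ f).symm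

theorem aeval_iterate_pointMap (j : ℕ) (X : Fin n → O) (f : MvPolynomial (Fin n) R) :
    aeval ((pointMap O Φ)^[j] X) f = aeval X ((substEnd R Φ ^ j) f) := by
  induction j generalizing f with
  | zero => rfl
  | succ j ih => rw [Function.iterate_succ_apply', aeval_pointMap, ih, pow_succ, AlgHom.mul_apply]

theorem iterate_pointMap (j : ℕ) :
    (pointMap O Φ)^[j] = pointMap O fun i => (substEnd R Φ ^ j) (X i) := by
  funext Y i
  rw [← aeval_X (R := R) ((pointMap O Φ)^[j] Y) i, aeval_iterate_pointMap, pointMap]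

theorem map_pointMap {K : Type*} [CommRing K] [Algebra R K] (π : O →ₐ[R] K) (Y : Fin n → O) :
    π ∘ pointMap O Φ Y = pointMap K Φ (π ∘ Y) :=
  funext fun i => comp_aeval_apply (φ := π) Y (Φ i)

theorem mapsTo_pointMap_closurePoints :
    Set.MapsTo (pointMap O Φ) (closurePoints O Φ) (closurePoints O Φ) := by
  intro Y hY G hG
  rw [aeval_pointMap]
  refine hY _ ?_
  rw [iterKer, RingHom.mem_ker] at hG ⊢
  rw [← AlgHom.mul_apply, ← pow_succ, pow_succ', AlgHom.mul_apply, hG, map_zero]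

theorem polySelfMap_map_algebraMap :
    polySelfMap (fun i => map (algebraMap R O) (Φ i)) = pointMap O Φ :=
  funext fun X => funext fun i => eval_map_algebraMap_eq_aeval X (Φ i)

theorem map_substEnd {S : Type*} [CommRing S] (φ : R →+* S) (f : MvPolynomial (Fin n) R) :
    map φ (substEnd R Φ f) = substEnd S (fun i => map φ (Φ i)) (map φ f) := by
  refine RingHom.congr_fun (f := (map φ).comp (substEnd R Φ : _ →+* MvPolynomial (Fin n) R))
    (g := (substEnd S fun i => map φ (Φ i) : _ →+* MvPolynomial (Fin n) S).comp (map φ)) ?_ f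
  ext <;> simp [substEnd]

theorem map_substEnd_pow {S : Type*} [CommRing S] (φ : R →+* S) (j : ℕ)
    (f : MvPolynomial (Fin n) R) :
    map φ ((substEnd R Φ ^ j) f) = (substEnd S (fun i => map φ (Φ i)) ^ j) (map φ f) := by
  induction j with
  | zero => rfl
  | succ j ih =>
    rw [pow_succ', pow_succ', AlgHom.mul_apply, AlgHom.mul_apply, ← ih, map_substEnd]

theorem mem_closurePoints_of_forall_iterKer_map {X : Fin n → O}
    (hX : ∀ G ∈ iterKer O fun i => map (algebraMap R O) (Φ i), eval X G = 0) :
    X ∈ closurePoints O Φ := by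
  intro G hG
  rw [← eval_map_algebraMap_eq_aeval]
  refine hX _ ?_
  rw [iterKer, RingHom.mem_ker] at hG ⊢
  rw [← map_substEnd_pow, hG, map_zero]

theorem hasDerivModOn_pointMap (I : Ideal O) {X₀ : Fin n → O} {S : Set (Fin n → O)}
    (hS : ∀ Y ∈ S, Y - X₀ ∈ piPow I 1) :
    HasDerivModOn I (pointMap O Φ) (.of fun i j => aeval X₀ (pderiv j (Φ i))) S := by
  intro k Y Z hY _ hYZ i
  have hTaylor := aeval_sub_aeval_sub_sum_pderiv_mem_sq hYZ (Φ i)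
  have hpd : ∑ j, (aeval Y (pderiv j (Φ i)) - aeval X₀ (pderiv j (Φ i))) * (Z j - Y j) ∈
      I ^ (k + 2) := by
    refine sum_mem fun j _ => ?_
    rw [pow_succ']
    exact Ideal.mul_mem_mul (aeval_sub_aeval_mem (fun i => by simpa using hS Y hY i) _) (hYZ j)
  rw [← pow_mul] at hTaylor
  have hsum := add_mem (Ideal.pow_le_pow_right (by lia) hTaylor) hpd
  simp only [sub_mul, Finset.sum_sub_distrib] at hsum
  simpa [Matrix.mulVec, dotProduct, pointMap] using hsum

theorem sub_mem_pow_of_eval_mem_pow {I : Ideal O} [I.IsMaximal] {F : Polynomial O} {a b : O}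
    {k : ℕ} (ha : F.eval a = 0) (hb : F.eval b ∈ I ^ k) (hab : b - a ∈ I)
    (hF' : F.derivative.eval a ∉ I) : b - a ∈ I ^ k := by
  obtain ⟨c, hc⟩ := Polynomial.binomExpansion F a (b - a)
  have hfactor : F.eval b = (F.derivative.eval a + c * (b - a)) * (b - a) := by
    rw [add_sub_cancel, ha] at hc
    rw [hc]
    ring
  have hunit : IsUnit (Ideal.Quotient.mk (I ^ k) (F.derivative.eval a + c * (b - a))) :=
    Ideal.Quotient.isUnit_mk_pow_of_notMem I
      fun h => hF' ((Ideal.add_mem_iff_left _ (I.mul_mem_left c hab)).1 h)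
  rw [hfactor, ← Ideal.Quotient.eq_zero_iff_mem, map_mul, hunit.mul_right_eq_zero] at hb
  exact Ideal.Quotient.eq_zero_iff_mem.1 hb

theorem aeval_eval₂_substEnd (Y : Fin n → O) (i : Fin n)
    (Q : Polynomial (MvPolynomial (Fin n) R)) :
    aeval Y (Q.eval₂ (substEnd R Φ : _ →+* MvPolynomial (Fin n) R) (X i)) =
      (Q.map (aeval (pointMap O Φ Y) : MvPolynomial (Fin n) R →ₐ[R] O)).eval (Y i) := by
  rw [Polynomial.eval_map]
  refine (Polynomial.hom_eval₂ Q _ (aeval Y : MvPolynomial (Fin n) R →ₐ[R] O).toRingHom _).trans ?_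
  congr 1
  · exact RingHom.ext fun f => (aeval_pointMap Φ Y f).symm
  · exact aeval_X Y i

theorem apply_sub_apply_mem_pow {I : Ideal O} [I.IsMaximal] {i : Fin n}
    {Q : Polynomial (MvPolynomial (Fin n) R)} {k : ℕ} {Y Z : Fin n → O}
    (hY : aeval Y (Q.eval₂ (substEnd R Φ : _ →+* MvPolynomial (Fin n) R) (X i)) = 0)
    (hZ : aeval Z (Q.eval₂ (substEnd R Φ : _ →+* MvPolynomial (Fin n) R) (X i)) = 0)
    (hY' : aeval Y (Q.derivative.eval₂ (substEnd R Φ : _ →+* MvPolynomial (Fin n) R) (X i)) ∉ I)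
    (hYZ : Z i - Y i ∈ I)
    (hΦ : pointMap O Φ Z - pointMap O Φ Y ∈ piPow I k) : Z i - Y i ∈ I ^ k := by
  rw [aeval_eval₂_substEnd] at hY hZ hY'
  rw [← Polynomial.derivative_map] at hY'
  refine sub_mem_pow_of_eval_mem_pow hY ?_ hYZ hY'
  have hcoeff : (Ideal.Quotient.mk (I ^ k)).comp
        (RingHomClass.toRingHom (aeval (R := R) (pointMap O Φ Y))) =
      (Ideal.Quotient.mk (I ^ k)).comp
        (RingHomClass.toRingHom (aeval (R := R) (pointMap O Φ Z))) :=
    RingHom.ext fun f => (Ideal.Quotient.eq.2 (aeval_sub_aeval_mem hΦ f)).symm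
  rw [← Ideal.Quotient.eq_zero_iff_mem, ← map_zero (Ideal.Quotient.mk (I ^ k)), ← hZ,
    Polynomial.eval_map, Polynomial.eval_map, Polynomial.hom_eval₂, Polynomial.hom_eval₂, hcoeff]

theorem exists_injModPowOn_pointMap {R : Type*} [CommRing R] [IsDomain R] [CharZero R]
    (Φ : Fin n → MvPolynomial (Fin n) R) :
    ∃ δ ∉ iterKer R Φ, ∀ (O : Type*) [CommRing O] [Algebra R O] (I : Ideal O) [I.IsMaximal]
      (S : Set (Fin n → O)), S ⊆ closurePoints O Φ → (∀ Y ∈ S, ∀ Z ∈ S, Z - Y ∈ piPow I 1) →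
      (∀ Y ∈ S, aeval Y δ ∉ I) → InjModPowOn I (pointMap O Φ) S := by
  have htr : Algebra.trdeg R (MvPolynomial (Fin n) R) ≤ n := by
    simp [MvPolynomial.trdeg_of_isDomain]
  choose Q hQ hQ' using fun i : Fin n =>
    exists_pow_eval₂_eq_zero_pow_eval₂_derivative_ne_zero htr (substEnd R Φ) (X i)
  refine ⟨∏ i, (Q i).derivative.eval₂ (substEnd R Φ) (X i), ?_, ?_⟩
  · rw [iterKer, RingHom.mem_ker, map_prod]
    exact Finset.prod_ne_zero_iff.2 fun i _ => hQ' i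
  · intro O _ _ I _ S hV hS hδ k Z Y hZ hY hΦ i
    refine apply_sub_apply_mem_pow Φ (hV hY _ (hQ i)) (hV hZ _ (hQ i)) (fun h => hδ Y hY ?_)
      (by simpa using hS Y hY Z hZ i) hΦ
    rw [map_prod]
    exact Ideal.prod_mem _ (Finset.mem_univ i) h

end PolynomialMaps

section TriangularReduction

universe u v

variable {σ : Type u} {k : Type v} [CommRing k]

/-- The polynomials all of whose monomials have degree less than `d`; the bound is strict so
that `d = 0` gives the zero submodule. -/
def degreeLT (σ k : Type*) [CommRing k] (d : ℕ) : Submodule k (MvPolynomial σ k) :=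
  restrictSupport k {m | m.degree < d}

theorem mem_degreeLT {d : ℕ} {f : MvPolynomial σ k} :
    f ∈ degreeLT σ k d ↔ ∀ m ∈ f.support, m.degree < d :=
  mem_restrictSupport_iff k

theorem mem_degreeLT_of_totalDegree_lt {d : ℕ} {f : MvPolynomial σ k} (hf : f.totalDegree < d) :
    f ∈ degreeLT σ k d :=
  mem_degreeLT.2 fun _ hm => (le_totalDegree hm).trans_lt hf

theorem map_mem_degreeLT {k' : Type*} [CommRing k'] (φ : k →+* k') {d : ℕ}
    {f : MvPolynomial σ k} (hf : f ∈ degreeLT σ k d) : map φ f ∈ degreeLT σ k' d :=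
  mem_degreeLT.2 fun m hm => mem_degreeLT.1 hf m (support_map_subset φ f hm)

theorem degreeLT_mono : Monotone (degreeLT σ k) :=
  fun _ _ h => restrictSupport_mono k fun _ hm => lt_of_lt_of_le hm h

theorem monomial_mem_degreeLT (a : σ →₀ ℕ) (c : k) : monomial a c ∈ degreeLT σ k (a.degree + 1) :=
  (monomial_mem_restrictSupport k).2 (.inl a.degree.lt_succ_self)

theorem mul_mem_degreeLT {d e : ℕ} {f g : MvPolynomial σ k} (hf : f ∈ degreeLT σ k d)
    (hg : g ∈ degreeLT σ k (e + 1)) : f * g ∈ degreeLT σ k (d + e) := by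
  have hmul := Submodule.mul_mem_mul hf hg
  rw [degreeLT, degreeLT, ← restrictSupport_add] at hmul
  refine restrictSupport_mono k ?_ hmul
  rintro _ ⟨a, ha, b, hb, rfl⟩
  rw [Set.mem_ofPred_eq] at ha hb ⊢
  rw [map_add]
  lia

/-- `f` is the monomial `a` plus terms of smaller degree. -/
def HasLeadingMonomial (f : MvPolynomial σ k) (a : σ →₀ ℕ) : Prop :=
  f - monomial a 1 ∈ degreeLT σ k a.degree

namespace HasLeadingMonomial

variable {f g : MvPolynomial σ k} {a b : σ →₀ ℕ}

theorem mem_degreeLT (hf : HasLeadingMonomial f a) : f ∈ degreeLT σ k (a.degree + 1) := by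
  simpa using add_mem (degreeLT_mono a.degree.le_succ hf) (monomial_mem_degreeLT a 1)

theorem monomial (a : σ →₀ ℕ) : HasLeadingMonomial (monomial a (1 : k)) a := by
  rw [HasLeadingMonomial, sub_self]
  exact zero_mem _

theorem mul (hf : HasLeadingMonomial f a) (hg : HasLeadingMonomial g b) :
    HasLeadingMonomial (f * g) (a + b) := by
  have hsplit : f * g - MvPolynomial.monomial (a + b) 1 =
      (f - MvPolynomial.monomial a 1) * g +
        (g - MvPolynomial.monomial b 1) * MvPolynomial.monomial a 1 := by
    rw [← mul_one (1 : k), ← monomial_mul, mul_one]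
    ring
  rw [HasLeadingMonomial, hsplit, map_add]
  refine add_mem (mul_mem_degreeLT hf hg.mem_degreeLT) ?_
  rw [add_comm]
  exact mul_mem_degreeLT hg (monomial_mem_degreeLT a 1)

theorem pow (hf : HasLeadingMonomial f a) (j : ℕ) : HasLeadingMonomial (f ^ j) (j • a) := by
  induction j with
  | zero => simpa using monomial (k := k) 0
  | succ j ih =>
    rw [pow_succ, succ_nsmul]
    exact ih.mul hf

theorem prod {ι : Type*} (s : Finset ι) {f : ι → MvPolynomial σ k} {a : ι → σ →₀ ℕ}
    (hf : ∀ i, HasLeadingMonomial (f i) (a i)) :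
    HasLeadingMonomial (∏ i ∈ s, f i) (∑ i ∈ s, a i) := by
  classical
  induction s using Finset.induction_on with
  | empty => simpa using monomial (k := k) 0
  | insert i s hi ih =>
    rw [Finset.prod_insert hi, Finset.sum_insert hi]
    exact (hf i).mul ih

end HasLeadingMonomial

theorem sum_smul_monomial_one (f : MvPolynomial σ k) :
    ∑ m ∈ f.support, coeff m f • monomial m (1 : k) = f := by
  simp [smul_monomial]

theorem hasLeadingMonomial_X_pow_sub {Q : ℕ} {f : MvPolynomial σ k} (hf : f ∈ degreeLT σ k Q)
    (i : σ) : HasLeadingMonomial (X i ^ Q - f) (Finsupp.single i Q) := by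
  rw [HasLeadingMonomial, X_pow_eq_monomial, sub_sub_cancel_left, Finsupp.degree_single]
  exact neg_mem hf

variable [Fintype σ]

/-- The monomial `m` with each factor `x_i ^ Q` replaced by `g i`. -/
def substPowMonomial (g : σ → MvPolynomial σ k) (Q : ℕ) (m : σ →₀ ℕ) : MvPolynomial σ k :=
  monomial (m.mapRange (· % Q) (Nat.zero_mod Q)) 1 * ∏ i, g i ^ (m i / Q)

/-- The `k`-linear map replacing `x_i ^ Q` by `g i` in every monomial. When `x_i ^ Q` is the
leading monomial of `g i` it is unitriangular for the degree filtration, and it carries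
polynomials divisible by `x_i ^ Q` to multiples of `g i`. -/
def substPow (g : σ → MvPolynomial σ k) (Q : ℕ) : MvPolynomial σ k →ₗ[k] MvPolynomial σ k :=
  (basisMonomials σ k).constr k (substPowMonomial g Q)

variable {g : σ → MvPolynomial σ k} {Q : ℕ}

theorem substPow_monomial_one (m : σ →₀ ℕ) :
    substPow g Q (monomial m 1) = substPowMonomial g Q m := by
  have h := (basisMonomials σ k).constr_basis k (substPowMonomial g Q) m
  rwa [coe_basisMonomials] at h

theorem substPow_apply (f : MvPolynomial σ k) :
    substPow g Q f = ∑ m ∈ f.support, coeff m f • substPowMonomial g Q m := by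
  conv_lhs => rw [← sum_smul_monomial_one f]
  simp_rw [map_sum, map_smul, substPow_monomial_one]

theorem hasLeadingMonomial_substPowMonomial
    (hg : ∀ i, HasLeadingMonomial (g i) (Finsupp.single i Q)) (m : σ →₀ ℕ) :
    HasLeadingMonomial (substPowMonomial g Q m) m := by
  classical
  have hm : m.mapRange (· % Q) (Nat.zero_mod Q) + ∑ i, (m i / Q) • Finsupp.single i Q = m := by
    ext j
    simpa [Finsupp.single_apply, mul_comm] using Nat.mod_add_div (m j) Q
  have hlead := (HasLeadingMonomial.monomial (k := k) (m.mapRange (· % Q) (Nat.zero_mod Q))).mul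
    (.prod Finset.univ fun i => (hg i).pow (m i / Q))
  rwa [hm] at hlead

theorem substPow_sub_self_mem_degreeLT (hg : ∀ i, HasLeadingMonomial (g i) (Finsupp.single i Q))
    {d : ℕ} {f : MvPolynomial σ k} (hf : f ∈ degreeLT σ k (d + 1)) :
    substPow g Q f - f ∈ degreeLT σ k d := by
  have hsum : substPow g Q f - f =
      ∑ m ∈ f.support, coeff m f • (substPowMonomial g Q m - monomial m 1) := by
    simp_rw [smul_sub, Finset.sum_sub_distrib, sum_smul_monomial_one, substPow_apply]
  rw [hsum]
  refine sum_mem fun m hm => Submodule.smul_mem _ _ ?_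
  exact degreeLT_mono (Nat.lt_succ_iff.1 (mem_degreeLT.1 hf m hm))
    (hasLeadingMonomial_substPowMonomial hg m)

theorem substPow_surjective (hg : ∀ i, HasLeadingMonomial (g i) (Finsupp.single i Q)) :
    Function.Surjective (substPow g Q) := by
  have hrange (d : ℕ) : degreeLT σ k d ≤ LinearMap.range (substPow g Q) := by
    induction d with
    | zero =>
      intro f hf
      have hf0 : f = 0 := support_eq_empty.1 <|
        Finset.eq_empty_of_forall_notMem fun m hm => (mem_degreeLT.1 hf m hm).not_ge (Nat.zero_le _)
      exact hf0 ▸ zero_mem _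
    | succ d ih =>
      intro f hf
      have hsub := sub_mem (LinearMap.mem_range_self (substPow g Q) f)
        (ih (substPow_sub_self_mem_degreeLT hg hf))
      rwa [sub_sub_cancel] at hsub
  exact fun f => hrange _ (mem_degreeLT_of_totalDegree_lt f.totalDegree.lt_succ_self)

theorem exists_mem_support_substPow (hg : ∀ i, HasLeadingMonomial (g i) (Finsupp.single i Q))
    {f : MvPolynomial σ k} (hf : f ≠ 0) : ∃ m ∈ f.support, m ∈ (substPow g Q f).support := by
  obtain ⟨m, hm, hmax⟩ := f.support.exists_max_image (·.degree) (support_nonempty.2 hf)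
  have hlow := substPow_sub_self_mem_degreeLT hg
    (mem_degreeLT.2 fun a ha => Nat.lt_succ_iff.2 (hmax a ha))
  have hcoeff : coeff m (substPow g Q f - f) = 0 :=
    notMem_support_iff.1 fun h => (mem_degreeLT.1 hlow m h).false
  rw [coeff_sub, sub_eq_zero] at hcoeff
  refine ⟨m, hm, ?_⟩
  rwa [mem_support_iff, hcoeff, ← mem_support_iff]

theorem substPowMonomial_single_add (hQ : 0 < Q) (i : σ) (m : σ →₀ ℕ) :
    substPowMonomial g Q (Finsupp.single i Q + m) = g i * substPowMonomial g Q m := by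
  classical
  have hmod : (Finsupp.single i Q + m).mapRange (· % Q) (Nat.zero_mod Q) =
      m.mapRange (· % Q) (Nat.zero_mod Q) := by
    ext j
    by_cases hij : i = j <;> simp [hij]
  have hdiv (j : σ) : (Finsupp.single i Q + m) j / Q = (if i = j then 1 else 0) + m j / Q := by
    by_cases hij : i = j <;> simp [hij, Nat.add_div_left _ hQ, Nat.add_comm]
  simp_rw [substPowMonomial, hmod, hdiv, pow_add, Finset.prod_mul_distrib]
  rw [show ∏ j, g j ^ (if i = j then 1 else 0) = g i by simp [pow_ite], mul_left_comm]

theorem substPow_X_pow_mul (hQ : 0 < Q) (i : σ) (f : MvPolynomial σ k) :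
    substPow g Q (X i ^ Q * f) = g i * substPow g Q f := by
  have hcomp : substPow g Q ∘ₗ LinearMap.mulLeft k (X i ^ Q) =
      LinearMap.mulLeft k (g i) ∘ₗ substPow g Q := by
    refine (basisMonomials σ k).ext fun m => ?_
    simp only [coe_basisMonomials, LinearMap.comp_apply, LinearMap.mulLeft_apply]
    rw [X_pow_eq_monomial, monomial_mul, one_mul, substPow_monomial_one, substPow_monomial_one,
      substPowMonomial_single_add hQ]
  exact LinearMap.congr_fun hcomp f

theorem exists_substPow_eq_of_mem_span (hQ : 0 < Q)
    (hg : ∀ i, HasLeadingMonomial (g i) (Finsupp.single i Q)) {f : MvPolynomial σ k}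
    (hf : f ∈ Ideal.span (Set.range g)) :
    ∃ h, substPow g Q h = f ∧ ∀ m ∈ h.support, Q ≤ m.degree := by
  classical
  obtain ⟨c, rfl⟩ := Ideal.mem_span_range_iff_exists_fun.1 hf
  choose h hh using fun i => substPow_surjective hg (c i)
  refine ⟨∑ i, X i ^ Q * h i, ?_, fun m hm => ?_⟩
  · simp_rw [map_sum, substPow_X_pow_mul hQ, hh, mul_comm]
  · obtain ⟨i, -, hi⟩ := Finset.mem_biUnion.1 (support_sum hm)
    rw [X_pow_eq_monomial, mem_support_iff, coeff_monomial_mul', one_mul] at hi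
    have hle : Finsupp.single i Q ≤ m := of_not_not fun h => hi (if_neg h)
    simpa using Finsupp.degree_mono hle

omit [Fintype σ] in
/-- The `g i` form a Gröbner basis for the degree filtration: their leading monomials are
pairwise coprime. -/
theorem eq_zero_of_mem_span_of_mem_degreeLT [Finite σ] (hQ : 0 < Q)
    (hg : ∀ i, HasLeadingMonomial (g i) (Finsupp.single i Q)) {f : MvPolynomial σ k}
    (hf : f ∈ Ideal.span (Set.range g)) (hd : f ∈ degreeLT σ k Q) : f = 0 := by
  cases nonempty_fintype σ
  obtain ⟨h, rfl, hh⟩ := exists_substPow_eq_of_mem_span hQ hg hf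
  by_contra hne
  have hh0 : h ≠ 0 := by
    rintro rfl
    exact hne (map_zero _)
  obtain ⟨m, hm, hm'⟩ := exists_mem_support_substPow hg hh0
  exact (hh m hm).not_gt (mem_degreeLT.1 hd m hm')

theorem substPowMonomial_mem_span (hQ : 0 < Q) {m : σ →₀ ℕ} {i : σ} (hi : Q ≤ m i) :
    substPowMonomial g Q m ∈ Ideal.span (Set.range g) := by
  refine Ideal.mul_mem_left _ _ (Ideal.prod_mem _ (Finset.mem_univ i) ?_)
  exact Ideal.pow_mem_of_mem _ (Ideal.subset_span (Set.mem_range_self i)) _ (Nat.div_pos hi hQ)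

theorem span_range_mk_substPowMonomial (hQ : 0 < Q)
    (hg : ∀ i, HasLeadingMonomial (g i) (Finsupp.single i Q)) :
    Submodule.span k (Set.range fun e : σ → Fin Q =>
      Ideal.Quotient.mkₐ k (Ideal.span (Set.range g))
        (substPowMonomial g Q (Finsupp.equivFunOnFinite.symm fun i => e i))) = ⊤ := by
  refine eq_top_iff.2 fun z _ => ?_
  obtain ⟨f, rfl⟩ := Ideal.Quotient.mkₐ_surjective k _ z
  obtain ⟨h, rfl⟩ := substPow_surjective hg f
  rw [substPow_apply, map_sum]
  refine sum_mem fun m _ => ?_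
  rw [map_smul]
  refine Submodule.smul_mem _ _ ?_
  by_cases hm : ∃ i, Q ≤ m i
  · obtain ⟨i, hi⟩ := hm
    have hzero : Ideal.Quotient.mkₐ k (Ideal.span (Set.range g)) (substPowMonomial g Q m) = 0 :=
      Ideal.Quotient.eq_zero_iff_mem.2 (substPowMonomial_mem_span hQ hi)
    rw [hzero]
    exact zero_mem _
  · push Not at hm
    refine Submodule.subset_span (Set.mem_range.2 ⟨fun i => ⟨m i, hm i⟩, ?_⟩)
    rw [Finsupp.equivFunOnFinite_symm_coe]

theorem exists_finite_algHom_apply_eq_zero [StrongRankCondition k] (hQ : 0 < Q)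
    (hg : ∀ i, HasLeadingMonomial (g i) (Finsupp.single i Q)) :
    ∃ (A : Type (max u v)) (_ : CommRing A) (_ : Algebra k A) (χ : MvPolynomial σ k →ₐ[k] A),
      Module.Finite k A ∧ Module.finrank k A ≤ Q ^ Fintype.card σ ∧ (∀ i, χ (g i) = 0) ∧
        ∀ f ∈ degreeLT σ k Q, χ f = 0 → f = 0 := by
  classical
  have hspan := span_range_mk_substPowMonomial hQ hg
  refine ⟨_, inferInstance, inferInstance, Ideal.Quotient.mkₐ k (Ideal.span (Set.range g)),
    ⟨Submodule.fg_def.2 ⟨_, Set.finite_range _, hspan⟩⟩, ?_, fun i => ?_, fun f hf h => ?_⟩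
  · simpa using finrank_le_of_span_eq_top hspan
  · exact Ideal.Quotient.eq_zero_iff_mem.2 (Ideal.subset_span (Set.mem_range_self i))
  · exact eq_zero_of_mem_span_of_mem_degreeLT hQ hg (Ideal.Quotient.eq_zero_iff_mem.1 h) hf

end TriangularReduction

section FrobeniusPoints

theorem pow_finrank_eq_zero_of_isNilpotent {k A : Type*} [CommRing k] [IsDomain k] [Ring A]
    [Algebra k A] [Module.Finite k A] [Module.Free k A] {a : A} (ha : IsNilpotent a) :
    a ^ Module.finrank k A = 0 := by
  have hchar := LinearMap.aeval_self_charpoly (Algebra.lmul k A a)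
  rw [IsNilpotent.charpoly_eq_X_pow_finrank (ha.map (Algebra.lmul k A)), map_pow,
    Polynomial.aeval_X, ← map_pow] at hchar
  exact Algebra.lmul_injective (hchar.trans (map_zero _).symm)

theorem exists_algHom_galoisField_ne_zero {p : ℕ} [Fact p.Prime] {A : Type*} [CommRing A]
    [Algebra (ZMod p) A] [Finite A] {a : A} (ha : ¬ IsNilpotent a) :
    ∃ l, 0 < l ∧ ∃ ψ : A →ₐ[ZMod p] GaloisField p l, ψ a ≠ 0 := by
  rw [nilpotent_iff_mem_prime] at ha
  push Not at ha
  obtain ⟨P, hP, haP⟩ := ha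
  have : Finite (A ⧸ P) := Finite.of_surjective _ Ideal.Quotient.mk_surjective
  let : Field (A ⧸ P) := (Finite.isField_of_domain (A ⧸ P)).toField
  have : CharP (A ⧸ P) p :=
    charP_of_injective_algebraMap (algebraMap (ZMod p) (A ⧸ P)).injective p
  have := Fintype.ofFinite (A ⧸ P)
  obtain ⟨l, -, hcard⟩ := FiniteField.card (A ⧸ P) p
  let e : (A ⧸ P) ≃ₐ[ZMod p] GaloisField p l :=
    GaloisField.algEquivGaloisField p l (by rw [Nat.card_eq_fintype_card, hcard])
  refine ⟨l, l.pos, (e : (A ⧸ P) →ₐ[ZMod p] GaloisField p l).comp (Ideal.Quotient.mkₐ _ P), ?_⟩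
  exact (map_ne_zero_iff e e.injective).2 (mt Ideal.Quotient.eq_zero_iff_mem.1 haP)

variable {n : ℕ} {Φ : Fin n → MvPolynomial (Fin n) ℤ} {p m : ℕ}

section Iterates

variable {A : Type*} [CommRing A] [ExpChar A p] {x : Fin n → A}

theorem aeval_pow_expChar_pow (x : Fin n → A) (m : ℕ) (f : MvPolynomial (Fin n) ℤ) :
    aeval (x ^ p ^ m) f = aeval x f ^ p ^ m :=
  (comp_aeval_apply (φ := (iterateFrobenius A p m).toIntAlgHom) x f).symm

theorem iterate_pointMap_eq_pow (hx : pointMap A Φ x = x ^ p ^ m) (j : ℕ) :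
    (pointMap A Φ)^[j] x = x ^ p ^ (m * j) := by
  induction j with
  | zero => simp
  | succ j ih =>
    rw [Function.iterate_succ_apply', ih]
    funext i
    rw [pointMap, aeval_pow_expChar_pow]
    change pointMap A Φ x i ^ _ = _
    rw [hx, Pi.pow_apply, Pi.pow_apply, ← pow_mul, ← pow_add, Nat.mul_succ, add_comm]

theorem aeval_substEnd_pow_eq_pow (hx : pointMap A Φ x = x ^ p ^ m) (j : ℕ)
    (f : MvPolynomial (Fin n) ℤ) : aeval x ((substEnd ℤ Φ ^ j) f) = aeval x f ^ p ^ (m * j) := by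
  rw [← aeval_iterate_pointMap, iterate_pointMap_eq_pow hx, aeval_pow_expChar_pow]

theorem mem_closurePoints_of_pointMap_eq_pow [IsReduced A] (hx : pointMap A Φ x = x ^ p ^ m) :
    x ∈ closurePoints A Φ := by
  intro G hG
  have hpow := aeval_substEnd_pow_eq_pow hx n G
  rw [(RingHom.mem_ker).1 hG, map_zero] at hpow
  exact eq_zero_of_pow_eq_zero hpow.symm

end Iterates

variable [Fact p.Prime]

/-- The points of `Φ(x) = x ^ q`, `q = p ^ m`, are those of the algebra
`A = 𝔽_p[x₁,…,xₙ] / (xᵢ ^ q - Φᵢ)`. If `D` were nilpotent in `A`, then `D ^ (q ^ n)` would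
vanish there, because `A` has rank at most `q ^ n`; but it is represented by `D ∘ Φⁿ`, whose
degree is too small. -/
theorem exists_galoisField_pointMap_eq_pow (hΦ : ∀ i, Φ i ∈ degreeLT (Fin n) ℤ (p ^ m))
    {D : MvPolynomial (Fin n) ℤ} (hD : (substEnd ℤ Φ ^ n) D ∈ degreeLT (Fin n) ℤ (p ^ m))
    (hD' : map (Int.castRingHom (ZMod p)) ((substEnd ℤ Φ ^ n) D) ≠ 0) :
    ∃ l, 0 < l ∧ ∃ x : Fin n → GaloisField p l,
      pointMap (GaloisField p l) Φ x = x ^ p ^ m ∧ aeval x D ≠ 0 := by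
  obtain ⟨A, _, _, χ, _, hrank, hχ, hχ'⟩ := exists_finite_algHom_apply_eq_zero
    (pow_pos (Fact.out : p.Prime).pos m)
    fun i => hasLeadingMonomial_X_pow_sub (map_mem_degreeLT (Int.castRingHom (ZMod p)) (hΦ i)) i
  have haeval (f : MvPolynomial (Fin n) ℤ) :
      aeval (χ ∘ X) f = χ (map (Int.castRingHom (ZMod p)) f) := by
    rw [← aeval_map_algebraMap (ZMod p), algebraMap_int_eq]
    exact (DFunLike.congr_fun (aeval_unique χ) _).symm
  have hχD : χ (map (Int.castRingHom (ZMod p)) ((substEnd ℤ Φ ^ n) D)) ≠ 0 :=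
    mt (hχ' _ (map_mem_degreeLT _ hD)) hD'
  have : Nontrivial A := nontrivial_of_ne _ _ hχD
  have : CharP A p := charP_of_injective_algebraMap (algebraMap (ZMod p) A).injective p
  have hx : pointMap A Φ (χ ∘ X) = (χ ∘ X) ^ p ^ m := by
    funext i
    have hi := hχ i
    rwa [map_sub, map_pow, sub_eq_zero, eq_comm, ← haeval] at hi
  have hnil : ¬ IsNilpotent (aeval (χ ∘ X) D) := fun h => by
    rw [← haeval, aeval_substEnd_pow_eq_pow hx] at hχD
    rw [Fintype.card_fin, ← pow_mul] at hrank
    exact hχD (pow_eq_zero_of_le hrank (pow_finrank_eq_zero_of_isNilpotent (k := ZMod p) h))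
  have : Finite A := Module.finite_of_finite (ZMod p)
  obtain ⟨l, hl, ψ, hψ⟩ := exists_algHom_galoisField_ne_zero (p := p) hnil
  let ψ' := (ψ : A →+* GaloisField p l).toIntAlgHom
  refine ⟨l, hl, ψ ∘ χ ∘ X, ?_, ?_⟩
  · exact (map_pointMap Φ ψ' (χ ∘ X)).symm.trans
      (funext fun i => by rw [hx]; exact map_pow ψ (χ (X i)) _)
  · exact ne_of_eq_of_ne (comp_aeval_apply (φ := ψ') (χ ∘ X) D).symm hψ

theorem iterate_pointMap_galoisField_eq_self {l : ℕ} (hl : 0 < l)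
    {x : Fin n → GaloisField p l} (hx : pointMap (GaloisField p l) Φ x = x ^ p ^ m) :
    (pointMap (GaloisField p l) Φ)^[l] x = x := by
  rw [iterate_pointMap_eq_pow hx]
  funext i
  have := Fintype.ofFinite (GaloisField p l)
  rw [Pi.pow_apply, mul_comm, pow_mul, ← GaloisField.card p l hl.ne', Nat.card_eq_fintype_card,
    FiniteField.pow_card_pow]

theorem exists_forall_lt_map_castRingHom_ne_zero {σ : Type*} {f : MvPolynomial σ ℤ} (hf : f ≠ 0) :
    ∃ B : ℕ, ∀ p, B < p → map (Int.castRingHom (ZMod p)) f ≠ 0 := by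
  obtain ⟨s, hs⟩ := ne_zero_iff.1 hf
  refine ⟨(coeff s f).natAbs, fun p hp h => hs ?_⟩
  have hdvd : (p : ℤ) ∣ coeff s f := by
    rw [← ZMod.intCast_zmod_eq_zero_iff_dvd, ← eq_intCast (Int.castRingHom (ZMod p)), ← coeff_map,
      h, coeff_zero]
  exact Int.eq_zero_of_abs_lt_dvd hdvd (by rwa [Int.abs_eq_natAbs, Int.ofNat_lt])

theorem exists_forall_lt_exists_galoisField_pointMap_eq_pow {D : MvPolynomial (Fin n) ℤ}
    (hD : D ∉ iterKer ℤ Φ) :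
    ∃ B : ℕ, ∀ (p : ℕ) [Fact p.Prime], B < p → ∃ m l, 0 < l ∧ ∃ x : Fin n → GaloisField p l,
      pointMap (GaloisField p l) Φ x = x ^ p ^ m ∧ aeval x D ≠ 0 := by
  obtain ⟨B, hB⟩ := exists_forall_lt_map_castRingHom_ne_zero hD
  refine ⟨B, fun p hp hBp => ?_⟩
  let d := (∑ i, (Φ i).totalDegree) + ((substEnd ℤ Φ ^ n) D).totalDegree
  have hlow {f : MvPolynomial (Fin n) ℤ} (hf : f.totalDegree ≤ d) :
      f ∈ degreeLT (Fin n) ℤ (p ^ d) :=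
    mem_degreeLT_of_totalDegree_lt (hf.trans_lt (Nat.lt_pow_self hp.out.one_lt))
  have hΦ (i : Fin n) : (Φ i).totalDegree ≤ d := le_add_right
    (Finset.single_le_sum (f := fun i => (Φ i).totalDegree) (fun _ _ => zero_le)
      (Finset.mem_univ i))
  exact ⟨d, exists_galoisField_pointMap_eq_pow (fun i => hlow (hΦ i)) (hlow le_add_self)
    (hB p hBp)⟩

end FrobeniusPoints

section Recurrence

theorem exists_pow_isIdempotentElem (M : Type*) [Monoid M] [Finite M] :
    ∃ N, 0 < N ∧ ∀ g : M, IsIdempotentElem (g ^ N) := by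
  obtain ⟨a, b, hab, heq⟩ := Finite.exists_ne_map_eq_of_infinite fun j (g : M) => g ^ j
  wlog hlt : a < b generalizing a b
  · exact this b a hab.symm heq.symm (hab.lt_or_gt.resolve_left hlt)
  have hperiod (g : M) {c : ℕ} (hc : a ≤ c) (j : ℕ) : g ^ (c + (b - a) * j) = g ^ c := by
    induction j with
    | zero => rfl
    | succ j ih =>
      rw [← ih, show c + (b - a) * (j + 1) = b + (c - a + (b - a) * j) by
          rw [Nat.mul_succ]; lia, pow_add, ← congrFun heq g, ← pow_add]
      congr 1
      lia
  refine ⟨(b - a) * (a + 1), Nat.mul_pos (Nat.sub_pos_of_lt hlt) a.succ_pos, fun g => ?_⟩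
  rw [IsIdempotentElem, ← pow_add]
  exact hperiod g (a.le_succ.trans (Nat.le_mul_of_pos_left _ (Nat.sub_pos_of_lt hlt))) _

theorem isMaximal_ker_of_finite {O K : Type*} [CommRing O] [CommRing K] [IsDomain K] [Finite K]
    (π : O →+* K) : (RingHom.ker π).IsMaximal := by
  have := RingHom.ker_isPrime π
  have : Finite (O ⧸ RingHom.ker π) := Finite.of_injective _ π.kerLift_injective
  exact Ideal.Quotient.maximal_of_isField _ (Finite.isField_of_domain _)

variable {R : Type*} [CommRing R] {n : ℕ} {O K : Type*} [CommRing O] [CommRing K] [Algebra R O]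
  [Algebra R K]

/-- The points of `V(O)` that reduce to `x` under `π : O → K`. -/
def closurePointsOver (Φ : Fin n → MvPolynomial (Fin n) R) (π : O →ₐ[R] K) (x : Fin n → K) :
    Set (Fin n → O) :=
  {X ∈ closurePoints O Φ | π ∘ X = x}

variable {Φ : Fin n → MvPolynomial (Fin n) R} {π : O →ₐ[R] K} {x : Fin n → K}

theorem mapsTo_pointMap_closurePointsOver :
    Set.MapsTo (pointMap O Φ) (closurePointsOver Φ π x) (closurePointsOver Φ π (pointMap K Φ x)) :=
  fun X hX => ⟨mapsTo_pointMap_closurePoints Φ hX.1, by rw [map_pointMap, hX.2]⟩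

theorem mapsTo_iterate_pointMap_closurePointsOver {l : ℕ} (hx : (pointMap K Φ)^[l] x = x) :
    Set.MapsTo (pointMap O Φ)^[l] (closurePointsOver Φ π x) (closurePointsOver Φ π x) := by
  have h (j : ℕ) : Set.MapsTo (pointMap O Φ)^[j] (closurePointsOver Φ π x)
      (closurePointsOver Φ π ((pointMap K Φ)^[j] x)) := by
    induction j with
    | zero => exact Set.mapsTo_id _
    | succ j ih =>
      rw [Function.iterate_succ', Function.iterate_succ_apply']
      exact mapsTo_pointMap_closurePointsOver.comp ih
  simpa only [hx] using h l

theorem sub_mem_piPow_one_of_mem_closurePointsOver {X Y : Fin n → O}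
    (hX : X ∈ closurePointsOver Φ π x) (hY : Y ∈ closurePointsOver Φ π x) :
    Y - X ∈ piPow (RingHom.ker (π : O →+* K)) 1 := by
  intro i
  rw [pow_one, RingHom.mem_ker, Pi.sub_apply, map_sub, sub_eq_zero]
  exact congrFun (hY.2.trans hX.2.symm) i

theorem exists_iterate_pointMap_sub_self_mem [IsDomain R] [CharZero R]
    (Φ : Fin n → MvPolynomial (Fin n) R) :
    ∃ δ ∉ iterKer R Φ, ∀ (K : Type*) [CommRing K] [IsDomain K] [Finite K] [Algebra R K] (p : ℕ)
      (x : Fin n → K) (l : ℕ), (p : K) = 0 → 0 < l → (pointMap K Φ)^[l] x = x →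
      (∀ j, aeval ((pointMap K Φ)^[j] x) δ ≠ 0) →
      ∃ a, 0 < a ∧ ∀ (O : Type*) [CommRing O] [Algebra R O] (π : O →ₐ[R] K),
        ∀ X ∈ closurePointsOver Φ π x, ∀ k,
          (pointMap O Φ)^[a * p ^ k] X - X ∈ piPow (RingHom.ker (π : O →+* K)) (k + 1) := by
  obtain ⟨δ, hδ, hinj⟩ := exists_injModPowOn_pointMap Φ
  refine ⟨δ, hδ, fun K _ _ _ _ p x l hp hl hx hδx => ?_⟩
  obtain ⟨N, hN, hidem⟩ := exists_pow_isIdempotentElem (Matrix (Fin n) (Fin n) K)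
  refine ⟨l * N, Nat.mul_pos hl hN, fun O _ _ π X hX k => ?_⟩
  have := isMaximal_ker_of_finite (π : O →+* K)
  have hmaps := mapsTo_iterate_pointMap_closurePointsOver (π := π) hx
  have hinj_orbit (j : ℕ) : InjModPowOn (RingHom.ker (π : O →+* K)) (pointMap O Φ)
      (closurePointsOver Φ π ((pointMap K Φ)^[j] x)) := by
    refine hinj O _ _ (fun Y hY => hY.1)
      (fun Y hY Z hZ => sub_mem_piPow_one_of_mem_closurePointsOver hY hZ) fun Y hY h => hδx j ?_
    rw [← hY.2]
    exact (comp_aeval_apply (φ := π) Y δ).symm.trans h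
  have hinj_iterate := InjModPowOn.iterate hinj_orbit (fun j => by
    rw [Function.iterate_succ_apply']
    exact mapsTo_pointMap_closurePointsOver) l
  have hderiv := hasDerivModOn_pointMap (fun i => (substEnd R Φ ^ l) (MvPolynomial.X i)) _
    fun Y hY => sub_mem_piPow_one_of_mem_closurePointsOver hX hY
  rw [← iterate_pointMap] at hderiv
  rw [Function.iterate_mul, Function.iterate_mul]
  refine (hderiv.iterate hmaps N).iterate_pow_sub_self_mem (hmaps.iterate N) ?_
    (.iterate (S := fun _ => _) (fun _ => hinj_iterate) (fun _ => hmaps) N) hp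
    (fun Y hY => sub_mem_piPow_one_of_mem_closurePointsOver hY (hmaps.iterate N hY)) k hX
  rw [map_pow]
  exact hidem _

end Recurrence

theorem mainAlg_recurrent_point_general {n : ℕ} (Φ : Fin n → MvPolynomial (Fin n) ℤ)
    {J : Ideal (MvPolynomial (Fin n) ℤ)} (hJ : ¬ J ≤ iterKer ℤ Φ) :
    ∃ B : ℕ, ∀ (p : ℕ) [Fact p.Prime], B < p → ∃ l, 0 < l ∧ ∃ a, 0 < a ∧
      ∃ x ∈ closurePoints (GaloisField p l) Φ, (∃ G ∈ J, aeval x G ≠ 0) ∧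
        ∀ (O : Type*) [CommRing O] (π : O →+* GaloisField p l), ∀ X ∈ closurePoints O Φ,
          π ∘ X = x → ∀ k, (pointMap O Φ)^[a * p ^ k] X - X ∈ piPow (RingHom.ker π) (k + 1) := by
  obtain ⟨G, hGJ, hG⟩ := SetLike.not_le_iff_exists.1 hJ
  obtain ⟨δ, hδ, hrec⟩ := exists_iterate_pointMap_sub_self_mem Φ
  have hδG : δ * G ∉ iterKer ℤ Φ := (RingHom.ker_isPrime _).mul_notMem hδ hG
  obtain ⟨B, hB⟩ := exists_forall_lt_exists_galoisField_pointMap_eq_pow hδG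
  refine ⟨B, fun p _ hBp => ?_⟩
  obtain ⟨m, l, hl, x, hx, hxδG⟩ := hB p hBp
  rw [map_mul] at hxδG
  have hδx (j : ℕ) : aeval ((pointMap (GaloisField p l) Φ)^[j] x) δ ≠ 0 := by
    rw [iterate_pointMap_eq_pow hx, aeval_pow_expChar_pow]
    exact pow_ne_zero _ (left_ne_zero_of_mul hxδG)
  obtain ⟨a, ha, hrec⟩ := hrec _ p x l (CharP.cast_eq_zero _ p) hl
    (iterate_pointMap_galoisField_eq_self hl hx) hδx
  exact ⟨l, hl, a, ha, x, mem_closurePoints_of_pointMap_eq_pow hx,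
    ⟨G, hGJ, right_ne_zero_of_mul hxδG⟩, fun O _ π X hX hπX => hrec O π.toIntAlgHom X ⟨hX, hπX⟩⟩

/-- **Main algebro-geometric theorem.** Let `Φ` be an `n`-variable polynomial self-map of
affine `n`-space with integer coefficients, `V` the Zariski closure over `ℤ` of the image of
`Φⁿ` (defined by the ideal `I(V(ℤ)) = ker (Φ*)ⁿ`), and `W` a proper closed subscheme of `V`
(given by an ideal `J` strictly containing `I(V(ℤ))`). Then for every sufficiently large
prime `p` there exist `q = p^l` and a point `x ∈ V(𝔽_q) ∖ W(𝔽_q)` such that for every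
`X ∈ V(ℤ_q)` reducing to `x` mod `p` we have `Φ^{a·p^k}(X) ≡ X (mod p^k)` for a fixed `a`
and every `k ≥ 1`; in particular `X` is uniformly recurrent for `Φ` in the `p`-adic
topology on `V(ℤ_q)`. -/
theorem mainAlg_recurrent_point (n : ℕ) (Φ : Fin n → MvPolynomial (Fin n) ℤ)
    (J : Ideal (MvPolynomial (Fin n) ℤ)) (hJ : iterKer ℤ Φ < J) :
    ∃ B : ℕ, ∀ (p : ℕ) (_ : Fact p.Prime), p > B →
      ∃ l : ℕ, 1 ≤ l ∧ ∃ a : ℕ, 0 < a ∧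
        ∃ x : Fin n → GaloisField p l,
          -- `x ∈ V(𝔽_q) ∖ W(𝔽_q)`
          ((∀ G ∈ iterKer ℤ Φ,
              eval x (MvPolynomial.map (Int.castRingHom (GaloisField p l)) G) = 0) ∧
            ¬ (∀ G ∈ J,
              eval x (MvPolynomial.map (Int.castRingHom (GaloisField p l)) G) = 0)) ∧
          -- for every `X ∈ V(ℤ_q)` with `π(X) = x`: `Φ^{a·p^k}(X) ≡ X (mod p^k)`
          (∀ (π : Zq p l →+* GaloisField p l), Function.Surjective π →
            RingHom.ker π = Ideal.span {(p : Zq p l)} →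
            ∀ X : Fin n → Zq p l,
              (∀ G ∈ iterKer (Zq p l)
                (fun i => MvPolynomial.map (Int.castRingHom (Zq p l)) (Φ i)),
                  eval X G = 0) →
              (∀ i, π (X i) = x i) →
              ∀ k : ℕ, 1 ≤ k → ∀ i,
                ((p : Zq p l) ^ k) ∣
                  ((polySelfMap
                    (fun i => MvPolynomial.map (Int.castRingHom (Zq p l)) (Φ i)))^[a * p ^ k]
                      X i - X i)) := by
  obtain ⟨B, hB⟩ := mainAlg_recurrent_point_general Φ hJ.not_ge
  refine ⟨B, fun p _ hBp => ?_⟩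
  obtain ⟨l, hl, a, ha, x, hxV, ⟨G, hGJ, hGx⟩, hrec⟩ := hB p hBp
  simp only [← algebraMap_int_eq, eval_map_algebraMap_eq_aeval, polySelfMap_map_algebraMap]
  refine ⟨l, hl, a, ha, x, ⟨hxV, fun h => hGx (h G hGJ)⟩, fun π _ hker X hX hπX k _ i => ?_⟩
  have hmem := hrec _ π X (mem_closurePoints_of_forall_iterKer_map Φ hX) (funext hπX) k i
  rw [hker, Ideal.span_singleton_pow, Ideal.mem_span_singleton] at hmem
  exact (pow_dvd_pow _ k.le_succ).trans hmem

end
end
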